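/- arXiv:1411.3233 — 2 statements merged into one kernel-verified Lean document; each statement's English description precedes it below -/
import Mathlib

section
/- Let (W,S) be a Coxeter group with S finite and let * be an involutive automorphism of W preserving S. Let I_* = {w ∈ W : w* = w⁻¹} be the set of twisted involutions. Then there is a unique function φ : I_* → ℕ such that φ(1) = 0 and for any w ∈ I_* and s ∈ S with sw < w (Bruhat order), φ(w) = φ(sw) + 1 if sw = ws*, and φ(w) = φ(sws*) if sw ≠ ws*. -/
namespace CoxAux

/-- Chebyshev-like sequence: `cheb (cos θ) k = sin (k θ) / sin θ`. -/
noncomputable def cheb (c : ℝ) : ℕ → ℝ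
  | 0 => 0
  | 1 => 1
  | (k + 2) => 2 * c * cheb c (k + 1) - cheb c k

theorem cheb_add_two (c : ℝ) (k : ℕ) : cheb c (k + 2) = 2 * c * cheb c (k + 1) - cheb c k := rfl

theorem cheb_sin (θ : ℝ) : ∀ k : ℕ, cheb (Real.cos θ) k * Real.sin θ = Real.sin (k * θ)
  | 0 => by simp [cheb]
  | 1 => by simp [cheb]
  | (k + 2) => by
    have h1 := cheb_sin θ (k + 1)
    have h0 := cheb_sin θ k
    have e2 : ((k + 2 : ℕ) : ℝ) * θ = (k + 1 : ℕ) * θ + θ := by push_cast; ring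
    have e0 : (k : ℝ) * θ = (k + 1 : ℕ) * θ - θ := by push_cast; ring
    rw [cheb_add_two, sub_mul, h0, mul_assoc, h1, e2, e0, Real.sin_add, Real.sin_sub]
    ring

theorem cheb_one : ∀ k : ℕ, cheb 1 k = k
  | 0 => by simp [cheb]
  | 1 => by simp [cheb]
  | (k + 2) => by
    rw [cheb_add_two, cheb_one (k + 1), cheb_one k]; push_cast; ring

theorem sin_pos_of_two_le {m : ℕ} (hm : 2 ≤ m) : 0 < Real.sin (Real.pi / m) := by
  have h2 : (2 : ℝ) ≤ m := by exact_mod_cast hm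
  apply Real.sin_pos_of_pos_of_lt_pi
  · have := Real.pi_pos; positivity
  · rw [div_lt_iff₀ (by linarith)]; nlinarith [Real.pi_pos]

theorem cheb_nonneg (m k : ℕ) (hm : m ≠ 1) (hk : m = 0 ∨ k ≤ m) :
    0 ≤ cheb (Real.cos (Real.pi / m)) k := by
  rcases Nat.eq_zero_or_pos m with rfl | hpos
  · simp [cheb_one]
  · have hm2 : 2 ≤ m := by omega
    have hk' : k ≤ m := by omega
    have hs := sin_pos_of_two_le hm2
    have h := cheb_sin (Real.pi / m) k
    have hmr : (0 : ℝ) < m := by exact_mod_cast hpos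
    have hkr : (k : ℝ) ≤ m := by exact_mod_cast hk'
    have : 0 ≤ Real.sin (k * (Real.pi / m)) := by
      apply Real.sin_nonneg_of_nonneg_of_le_pi
      · have := Real.pi_pos; positivity
      · rw [← mul_div_assoc, div_le_iff₀ hmr]; nlinarith [Real.pi_pos]
    by_contra hneg
    push Not at hneg
    nlinarith

theorem cheb_two_mul (m : ℕ) (hm : 2 ≤ m) : cheb (Real.cos (Real.pi / m)) (2 * m) = 0 ∧
    cheb (Real.cos (Real.pi / m)) (2 * m + 1) = 1 := by
  have hs := sin_pos_of_two_le hm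
  have hmr : (m : ℝ) ≠ 0 := by positivity
  have h0 := cheb_sin (Real.pi / m) (2 * m)
  have h1 := cheb_sin (Real.pi / m) (2 * m + 1)
  have e0 : ((2 * m : ℕ) : ℝ) * (Real.pi / m) = 2 * Real.pi := by
    push_cast; field_simp
  have e1 : ((2 * m + 1 : ℕ) : ℝ) * (Real.pi / m) = Real.pi / m + 2 * Real.pi := by
    push_cast; field_simp; ring
  rw [e0, Real.sin_two_pi] at h0
  rw [e1, Real.sin_add_two_pi] at h1
  constructor
  · exact (mul_eq_zero.mp h0).resolve_right hs.ne'
  · exact mul_right_cancel₀ hs.ne' (by rw [h1, one_mul])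

theorem dvd_of_cheb (m n : ℕ) (hm : m ≠ 1) (h0 : cheb (Real.cos (Real.pi / m)) (2 * n) = 0)
    (h1 : cheb (Real.cos (Real.pi / m)) (2 * n + 1) = 1) : m ∣ n := by
  rcases Nat.eq_zero_or_pos m with rfl | hpos
  · simp [cheb_one] at h0
    simp [h0]
  · have hm2 : 2 ≤ m := by omega
    have hs := sin_pos_of_two_le hm2
    have hmr : (m : ℝ) ≠ 0 := by positivity
    have k0 := cheb_sin (Real.pi / m) (2 * n)
    have k1 := cheb_sin (Real.pi / m) (2 * n + 1)
    rw [h0, zero_mul] at k0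
    have e1 : ((2 * n + 1 : ℕ) : ℝ) * (Real.pi / m)
      = ((2 * n : ℕ) : ℝ) * (Real.pi / m) + Real.pi / m := by push_cast; ring
    rw [h1, e1, Real.sin_add, ← k0, one_mul, zero_mul, zero_add] at k1
    have hc : Real.cos (((2 * n : ℕ) : ℝ) * (Real.pi / m)) = 1 :=
      mul_right_cancel₀ hs.ne' (by rw [← k1, one_mul])
    obtain ⟨z, hz⟩ := (Real.cos_eq_one_iff _).mp hc
    have hz' : (z : ℝ) * m = n := by
      have hp := Real.pi_pos.ne'
      push_cast at hz
      field_simp at hz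
      linarith
    have hz2 : z * (m : ℤ) = n := by exact_mod_cast hz'
    exact Int.natCast_dvd_natCast.mp ⟨z, by rw [← hz2, mul_comm]⟩

section rep

variable {B : Type} [Fintype B] [DecidableEq B] (M : CoxeterMatrix B)

/-- Twice the standard symmetric bilinear form. -/
noncomputable def F : LinearMap.BilinForm ℝ (B → ℝ) :=
  Matrix.toBilin' (Matrix.of fun i j => -2 * Real.cos (Real.pi / M i j))

/-- Simple roots. -/
def al (i : B) : B → ℝ := Pi.single i 1

theorem F_al (i j : B) : F M (al i) (al j) = -2 * Real.cos (Real.pi / M i j) := by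
  simp [F, al, Matrix.toBilin'_single]

theorem F_self (i : B) : F M (al i) (al i) = 2 := by
  rw [F_al, M.diagonal]; simp

theorem F_symm (x y : B → ℝ) : F M x y = F M y x := by
  simp only [F, Matrix.toBilin'_apply, Matrix.of_apply]
  rw [Finset.sum_comm]
  refine Finset.sum_congr rfl fun i _ => Finset.sum_congr rfl fun j _ => ?_
  rw [M.symmetric i j]; ring

/-- Simple reflections acting on the space. -/
noncomputable def r (i : B) : Module.End ℝ (B → ℝ) :=
  LinearMap.id - (F M (al i)).smulRight (al i)

theorem r_apply (i : B) (x : B → ℝ) : r M i x = x - F M (al i) x • al i := rfl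

theorem r_F (i : B) (x y : B → ℝ) : F M (r M i x) (r M i y) = F M x y := by
  simp only [r_apply, map_sub, map_smul, LinearMap.sub_apply, LinearMap.smul_apply, smul_eq_mul,
    F_self]
  rw [F_symm M x (al i)]
  ring

theorem r_sq (i : B) : r M i * r M i = 1 := by
  refine LinearMap.ext fun x => ?_
  simp only [Module.End.mul_apply, r_apply, map_sub, map_smul, F_self, smul_eq_mul,
    Module.End.one_apply]
  module

theorem r_al_self (i : B) : r M i (al i) = - al i := by
  rw [r_apply, F_self]; module

theorem r_al (i j : B) (a b : ℝ) : r M i (a • al i + b • al j) =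
    (2 * Real.cos (Real.pi / M i j) * b - a) • al i + b • al j := by
  simp only [r_apply, map_add, map_smul, F_self, F_al M i j]
  module

theorem rr_pow_al (i j : B) (n : ℕ) : ((r M i * r M j) ^ n) (al i) =
    cheb (Real.cos (Real.pi / M i j)) (2 * n + 1) • al i +
    cheb (Real.cos (Real.pi / M i j)) (2 * n) • al j := by
  induction n with
  | zero => simp [cheb]
  | succ n ih =>
    rw [pow_succ', Module.End.mul_apply, ih, Module.End.mul_apply, add_comm, r_al, add_comm, r_al,
      M.symmetric j i, show 2 * (n + 1) = 2 * n + 2 by ring, cheb_add_two _ (2 * n + 1),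
      cheb_add_two _ (2 * n)]

theorem liftable : M.IsLiftable (r M) := by
  intro i j
  by_cases hij : i = j
  · subst hij; rw [M.diagonal, pow_one, r_sq]
  rcases Nat.eq_zero_or_pos (M i j) with h0 | hpos
  · rw [h0, pow_zero]
  have hm2 : 2 ≤ M i j := by have := M.off_diagonal i j hij; omega
  have hi : ((r M i * r M j) ^ M i j) (al i) = al i := by
    rw [rr_pow_al, (cheb_two_mul _ hm2).1, (cheb_two_mul _ hm2).2]; simp
  have hj' : ((r M j * r M i) ^ M i j) (al j) = al j := by
    rw [rr_pow_al, M.symmetric j i, (cheb_two_mul _ hm2).1, (cheb_two_mul _ hm2).2]; simp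
  have hinv : ∀ i j, (r M i * r M j) * (r M j * r M i) = 1 := fun i j => by
    rw [mul_assoc, ← mul_assoc (r M j), r_sq, one_mul, r_sq]
  have hj : ((r M i * r M j) ^ M i j) (al j) = al j := by
    have hc : Commute (r M i * r M j) (r M j * r M i) := by
      rw [Commute, SemiconjBy, hinv, hinv]
    have := hc.mul_pow (M i j)
    rw [hinv, one_pow] at this
    conv_lhs => rw [← hj']
    rw [← Module.End.mul_apply, ← this, Module.End.one_apply]
  have hfix : ∀ p, F M (al i) p = 0 → F M (al j) p = 0 → ∀ n, ((r M i * r M j) ^ n) p = p := by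
    intro p h1 h2 n
    induction n with
    | zero => simp
    | succ n ih =>
      rw [pow_succ, Module.End.mul_apply, Module.End.mul_apply, r_apply M j, h2, zero_smul,
        sub_zero, r_apply, h1, zero_smul, sub_zero, ih]
  refine LinearMap.ext fun x => ?_
  set c := Real.cos (Real.pi / M i j) with hc
  have hs := sin_pos_of_two_le hm2
  have hd : 1 - c ^ 2 ≠ 0 := by
    have := Real.sin_sq_add_cos_sq (Real.pi / M i j)
    rw [← hc] at this
    nlinarith
  set a := (F M (al i) x + c * F M (al j) x) / (2 * (1 - c ^ 2)) with ha
  set b := (F M (al j) x + c * F M (al i) x) / (2 * (1 - c ^ 2)) with hb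
  have hp := hfix (x - a • al i - b • al j) (by
      simp only [map_sub, map_smul, F_self, F_al, smul_eq_mul, ← hc]
      rw [ha, hb]; field_simp; ring) (by
      simp only [map_sub, map_smul, F_self, F_al, smul_eq_mul, M.symmetric j i, ← hc]
      rw [ha, hb]; field_simp; ring) (M i j)
  simp only [map_sub, map_smul, hi, hj] at hp
  simpa using hp



variable {M} {W : Type} [Group W] (cs : CoxeterSystem M W)

/-- The geometric representation. -/
noncomputable def rho : W →* Module.End ℝ (B → ℝ) := cs.lift ⟨r M, liftable M⟩

theorem rho_simple (i : B) : rho cs (cs.simple i) = r M i := cs.lift_apply_simple (liftable M) i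

theorem rho_F (w : W) (x y : B → ℝ) : F M (rho cs w x) (rho cs w y) = F M x y := by
  induction w using cs.simple_induction_left generalizing x y with
  | one => simp
  | mul_simple_left w i ih =>
    rw [map_mul, rho_simple, Module.End.mul_apply, Module.End.mul_apply, r_F, ih]

theorem rho_inv_apply (w : W) (x : B → ℝ) : rho cs w (rho cs w⁻¹ x) = x := by
  rw [← Module.End.mul_apply, ← map_mul, mul_inv_cancel, map_one, Module.End.one_apply]

theorem rho_F_inv (w : W) (x y : B → ℝ) : F M x (rho cs w⁻¹ y) = F M (rho cs w x) y := by
  rw [← rho_F cs w, rho_inv_apply]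

theorem rho_alt (i t : B) (k : ℕ) :
    rho cs (cs.wordProd (CoxeterSystem.alternatingWord i t k)) (al i) =
    if Even k then cheb (Real.cos (Real.pi / M i t)) (k + 1) • al i +
        cheb (Real.cos (Real.pi / M i t)) k • al t
      else cheb (Real.cos (Real.pi / M i t)) k • al i +
        cheb (Real.cos (Real.pi / M i t)) (k + 1) • al t := by
  induction k with
  | zero => simp [CoxeterSystem.alternatingWord, cheb]
  | succ k ih =>
    rw [CoxeterSystem.alternatingWord_succ', cs.wordProd_cons, map_mul, Module.End.mul_apply, ih,
      rho_simple]
    by_cases hk : Even k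
    · have hk' : ¬ Even (k + 1) := by simp [hk, parity_simps]
      rw [if_pos hk, if_pos hk, if_neg hk', add_comm, r_al, M.symmetric t i, cheb_add_two]
      exact add_comm _ _
    · have hk' : Even (k + 1) := by simp [hk, parity_simps]
      rw [if_neg hk, if_neg hk, if_pos hk', r_al, cheb_add_two]

theorem al_nonneg (i b : B) : 0 ≤ al i b := by
  unfold al
  by_cases h : b = i
  · subst h; simp
  · simp [h]

theorem pos_aux (n : ℕ) : ∀ (w : W), cs.length w = n → ∀ (i : B), ¬ cs.IsRightDescent w i →
    ∀ b, 0 ≤ rho cs w (al i) b := by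
  classical
  induction n using Nat.strong_induction_on with
  | _ n IH =>
  intro w hwn i hi b
  by_cases hw1 : w = 1
  · subst hw1; simpa using al_nonneg i b
  obtain ⟨t, ht⟩ := cs.exists_rightDescent_of_ne_one hw1
  have hti : i ≠ t := by rintro rfl; exact hi ht
  let P : ℕ → Prop := fun k => ∃ v, w = v * cs.wordProd (CoxeterSystem.alternatingWord i t k) ∧
    cs.length v + k = cs.length w
  have hP1 : P 1 := ⟨w * cs.simple t, by simp [CoxeterSystem.alternatingWord],
    cs.isRightDescent_iff.mp ht⟩
  have hlw : 1 ≤ cs.length w := by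
    have := cs.isRightDescent_iff.mp ht; omega
  obtain ⟨k, hk1, hPk, hPk1⟩ : ∃ k, 1 ≤ k ∧ P k ∧ ¬ P (k + 1) := by
    refine ⟨Nat.findGreatest P (cs.length w), Nat.le_findGreatest hlw hP1,
      Nat.findGreatest_spec hlw hP1, fun h => ?_⟩
    have hle : Nat.findGreatest P (cs.length w) + 1 ≤ cs.length w := by
      obtain ⟨v, _, hv⟩ := h; omega
    exact Nat.findGreatest_is_greatest (Nat.lt_succ_self _) hle h
  obtain ⟨v, hwv, hlv⟩ := hPk
  have hlen : ∀ j, cs.length (cs.wordProd (CoxeterSystem.alternatingWord i t j)) ≤ j := fun j => by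
    simpa using cs.length_wordProd_le (CoxeterSystem.alternatingWord i t j)
  -- the next letter is not a right descent of v
  have hnext : ¬ cs.IsRightDescent v (if Even k then t else i) := by
    intro hd
    refine hPk1 ⟨v * cs.simple (if Even k then t else i), ?_, ?_⟩
    · rw [CoxeterSystem.alternatingWord_succ', cs.wordProd_cons, ← mul_assoc,
        cs.simple_mul_simple_cancel_right, hwv]
    · have := cs.isRightDescent_iff.mp hd; omega
  have hfirst : ¬ cs.IsRightDescent v (if Even k then i else t) := by
    intro hd
    obtain ⟨k', rfl⟩ : ∃ k', k = k' + 1 := ⟨k - 1, by omega⟩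
    have he : (if Even (k' + 1) then i else t) = (if Even k' then t else i) := by
      by_cases hk : Even k' <;> simp [hk, parity_simps]
    rw [he] at hd
    rw [CoxeterSystem.alternatingWord_succ', cs.wordProd_cons, ← mul_assoc] at hwv
    have h1 := cs.isRightDescent_iff.mp hd
    have h2 := cs.length_mul_le (v * cs.simple (if Even k' then t else i))
      (cs.wordProd (CoxeterSystem.alternatingWord i t k'))
    rw [← hwv] at h2
    have h3 := hlen k'
    omega
  have hvi : ¬ cs.IsRightDescent v i := by
    by_cases hk : Even k
    · simpa [hk] using hfirst
    · simpa [hk] using hnext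
  have hvt : ¬ cs.IsRightDescent v t := by
    by_cases hk : Even k
    · simpa [hk] using hnext
    · simpa [hk] using hfirst
  have pi := IH (cs.length v) (by omega) v rfl i hvi b
  have pt := IH (cs.length v) (by omega) v rfl t hvt b
  have hkm : M i t = 0 ∨ k + 1 ≤ M i t := by
    by_contra hcon
    push Not at hcon
    obtain ⟨hm0, hmk⟩ := hcon
    have hred : cs.IsReduced (CoxeterSystem.alternatingWord i t k) := by
      have h2 := cs.length_mul_le v (cs.wordProd (CoxeterSystem.alternatingWord i t k))
      rw [← hwv] at h2
      have h3 := hlen k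
      rw [CoxeterSystem.IsReduced, CoxeterSystem.length_alternatingWord]
      omega
    have hkeq : k = M i t := by
      by_contra hne
      exact cs.not_isReduced_alternatingWord i t hm0 (by omega) hred
    have hb := cs.wordProd_braidWord_eq i t
    unfold CoxeterSystem.braidWord at hb
    rw [M.symmetric t i, ← hkeq] at hb
    obtain ⟨k', rfl⟩ : ∃ k', k = k' + 1 := ⟨k - 1, by omega⟩
    rw [CoxeterSystem.alternatingWord_succ t i, cs.wordProd_concat] at hb
    rw [hb, ← mul_assoc] at hwv
    have hws : w * cs.simple i = v * cs.wordProd (CoxeterSystem.alternatingWord i t k') := by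
      rw [hwv, cs.simple_mul_simple_cancel_right]
    apply hi
    unfold CoxeterSystem.IsRightDescent
    rw [hws]
    have h2 := cs.length_mul_le v (cs.wordProd (CoxeterSystem.alternatingWord i t k'))
    have h3 := hlen k'
    omega
  have hm1 := M.off_diagonal i t hti
  have c0 := cheb_nonneg (M i t) k hm1 (by omega)
  have c1 := cheb_nonneg (M i t) (k + 1) hm1 (by omega)
  rw [hwv, map_mul, Module.End.mul_apply, rho_alt]
  by_cases hk : Even k
  · rw [if_pos hk]
    simp only [map_add, map_smul, Pi.add_apply, Pi.smul_apply, smul_eq_mul]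
    positivity
  · rw [if_neg hk]
    simp only [map_add, map_smul, Pi.add_apply, Pi.smul_apply, smul_eq_mul]
    positivity

theorem root_pos (w : W) (i : B) (h : ¬ cs.IsRightDescent w i) (b : B) :
    0 ≤ rho cs w (al i) b := pos_aux cs _ w rfl i h b

theorem root_neg (w : W) (i : B) (h : cs.IsRightDescent w i) (b : B) :
    rho cs w (al i) b ≤ 0 := by
  have h' := cs.isRightDescent_iff_not_isRightDescent_mul.mp h
  have := root_pos cs _ i h' b
  rw [map_mul, Module.End.mul_apply, rho_simple, r_al_self, map_neg, Pi.neg_apply] at this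
  linarith

theorem rho_faithful (w : W) (h : rho cs w = 1) : w = 1 := by
  by_contra hw
  obtain ⟨t, ht⟩ := cs.exists_rightDescent_of_ne_one hw
  have := root_neg cs w t ht t
  rw [h] at this
  simp [al] at this
  linarith

theorem simple_inj {i j : B} (h : cs.simple i = cs.simple j) : i = j := by
  by_contra hij
  have h1 : r M i = r M j := by rw [← rho_simple cs, h, rho_simple]
  have h2 := congrFun (LinearMap.congr_fun h1 (al i)) i
  rw [r_al_self, r_apply] at h2
  simp [al, hij] at h2
  linarith

theorem dvd_of_pow (i j : B) (n : ℕ) (h : (cs.simple i * cs.simple j) ^ n = 1) : M i j ∣ n := by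
  by_cases hij : i = j
  · subst hij; simp
  have h1 := rr_pow_al M i j n
  rw [← rho_simple cs, ← rho_simple cs, ← map_mul, ← map_pow, h, map_one, Module.End.one_apply] at h1
  have e1 := congrFun h1 i
  have e2 := congrFun h1 j
  simp [al, hij, Ne.symm hij] at e1 e2
  exact dvd_of_cheb _ _ (M.off_diagonal i j hij) e2.symm e1.symm



theorem coef_neg_one (w : W) (i j : B) (h : cs.IsRightDescent w j) (c : ℝ)
    (hc : rho cs w (al j) = c • al i) : rho cs w (al j) = - al i := by
  have h1 := rho_F cs w (al j) (al j)
  rw [F_self, hc] at h1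
  simp only [map_smul, LinearMap.smul_apply, F_self, smul_eq_mul] at h1
  have h2 := root_neg cs w j h i
  rw [hc] at h2
  simp [al] at h2
  have h3 : c = -1 := by nlinarith
  rw [hc, h3]; simp

theorem root_of_comm (w : W) (i j : B) (h : cs.IsRightDescent w j)
    (hc : cs.simple i * w = w * cs.simple j) : rho cs w (al j) = - al i := by
  have h1 : rho cs (cs.simple i * w) (al j) = rho cs (w * cs.simple j) (al j) := by rw [hc]
  rw [map_mul, map_mul, Module.End.mul_apply, Module.End.mul_apply, rho_simple, rho_simple,
    r_al_self, map_neg, r_apply] at h1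
  apply coef_neg_one cs w i j h (F M (al i) (rho cs w (al j)) / 2)
  have h2 : (2 : ℝ) • rho cs w (al j) = F M (al i) (rho cs w (al j)) • al i := by
    rw [two_smul]
    linear_combination (exp := 1) h1
  rw [div_eq_inv_mul, mul_smul, ← h2, smul_smul]
  norm_num

theorem comm_of_root (w : W) (i j : B) (h : rho cs w (al j) = - al i) :
    cs.simple i * w = w * cs.simple j := by
  have key : rho cs (w * cs.simple j * w⁻¹) = rho cs (cs.simple i) := by
    refine LinearMap.ext fun x => ?_
    rw [map_mul, map_mul, Module.End.mul_apply, Module.End.mul_apply, rho_simple, rho_simple,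
      r_apply, map_sub, rho_inv_apply, map_smul, rho_F_inv, h, r_apply]
    simp
  have h1 : rho cs (cs.simple i * (w * cs.simple j * w⁻¹)) = 1 := by
    rw [map_mul, key, ← map_mul, cs.simple_mul_simple_self, map_one]
  have h2 := rho_faithful cs _ h1
  have h3 : cs.simple i = w * cs.simple j * w⁻¹ := by
    have := eq_inv_of_mul_eq_one_right h2
    rw [cs.inv_simple] at this
    exact this.symm
  rw [h3]; group

theorem lift_prop (w : W) (i j : B) (hj : cs.IsRightDescent w j)
    (hn : ¬ cs.IsRightDescent (cs.simple i * w) j) : cs.simple i * w = w * cs.simple j := by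
  apply comm_of_root
  apply coef_neg_one cs w i j hj (rho cs w (al j) i)
  funext b
  by_cases hb : b = i
  · subst hb; simp [al]
  · have h1 := root_neg cs w j hj b
    have h2 := root_pos cs _ j hn b
    rw [map_mul, Module.End.mul_apply, rho_simple, r_apply] at h2
    simp [al, hb] at h2 h1 ⊢
    linarith

section twist

variable (st : W ≃* W) (sg : B → B)

/-- The permutation of coordinates. -/
noncomputable def theta (sg : B → B) : Module.End ℝ (B → ℝ) := LinearMap.funLeft ℝ ℝ sg

theorem theta_al (hsg : ∀ i, sg (sg i) = i) (i : B) : theta sg (al i) = al (sg i) := by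
  funext b
  simp only [theta, LinearMap.funLeft_apply, al, Pi.single_apply]
  congr 1
  exact propext ⟨fun h => by rw [← h, hsg], fun h => by rw [h, hsg]⟩

theorem sg_sg (hst_inv : ∀ w, st (st w) = w) (h : ∀ i, st (cs.simple i) = cs.simple (sg i))
    (i : B) : sg (sg i) = i := by
  apply simple_inj cs
  rw [← h, ← h, hst_inv]

theorem M_sg (h : ∀ i, st (cs.simple i) = cs.simple (sg i)) (i j : B) :
    M (sg i) (sg j) = M i j := by
  apply Nat.dvd_antisymm
  · apply dvd_of_pow cs
    rw [← h, ← h, ← map_mul, ← map_pow, cs.simple_mul_simple_pow, map_one]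
  · apply dvd_of_pow cs
    apply st.injective
    rw [map_pow, map_mul, h, h, cs.simple_mul_simple_pow, map_one]

theorem theta_r (hst_inv : ∀ w, st (st w) = w) (h : ∀ i, st (cs.simple i) = cs.simple (sg i))
    (i : B) : r M (sg i) * theta sg = theta sg * r M i := by
  have hs := sg_sg cs st sg hst_inv h
  have hF : (F M (al (sg i))).comp (theta sg) = F M (al i) := by
    refine (Pi.basisFun ℝ B).ext fun j => ?_
    rw [Pi.basisFun_apply]
    change F M (al (sg i)) (theta sg (al j)) = F M (al i) (al j)
    rw [theta_al sg hs, F_al, F_al, M_sg cs st sg h]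
  refine LinearMap.ext fun x => ?_
  rw [Module.End.mul_apply, Module.End.mul_apply, r_apply, r_apply, map_sub, map_smul,
    theta_al sg hs, ← hF]
  rfl

theorem length_st_le (h : ∀ i, st (cs.simple i) = cs.simple (sg i)) (w : W) :
    cs.length (st w) ≤ cs.length w := by
  obtain ⟨ω, hω, rfl⟩ := cs.exists_isReduced w
  have : st (cs.wordProd ω) = cs.wordProd (ω.map sg) := by
    simp only [CoxeterSystem.wordProd, map_list_prod, List.map_map]
    congr 1
    apply List.map_congr_left
    intro i _
    exact h i
  rw [this, hω.eq]
  simpa using cs.length_wordProd_le (ω.map sg)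

theorem length_st (hst_inv : ∀ w, st (st w) = w) (h : ∀ i, st (cs.simple i) = cs.simple (sg i))
    (w : W) : cs.length (st w) = cs.length w := by
  apply le_antisymm (length_st_le cs st sg h w)
  conv_lhs => rw [← hst_inv w]
  exact length_st_le cs st sg h _

theorem right_desc (hst_inv : ∀ w, st (st w) = w) (h : ∀ i, st (cs.simple i) = cs.simple (sg i))
    (w : W) (hw : st w = w⁻¹) (i : B) (hi : cs.length (cs.simple i * w) < cs.length w) :
    cs.IsRightDescent w (sg i) := by
  unfold CoxeterSystem.IsRightDescent
  rw [← cs.length_inv, mul_inv_rev, cs.inv_simple, ← hw, ← h, ← map_mul, length_st cs st sg hst_inv h]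
  exact hi

/-- The real-valued candidate. -/
noncomputable def psi (w : W) : ℝ :=
  (LinearMap.trace ℝ (B → ℝ) (theta sg) - LinearMap.trace ℝ (B → ℝ) (rho cs w * theta sg)) / 2

theorem psi_one : psi cs sg 1 = 0 := by simp [psi]

theorem psi_conj (hst_inv : ∀ w, st (st w) = w) (h : ∀ i, st (cs.simple i) = cs.simple (sg i))
    (w : W) (i : B) : psi cs sg (cs.simple i * w * st (cs.simple i)) = psi cs sg w := by
  have e : rho cs (cs.simple i * w * st (cs.simple i)) * theta sg =
      r M i * ((rho cs w * theta sg) * r M i) := by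
    rw [h, map_mul, map_mul, rho_simple, rho_simple, mul_assoc, theta_r cs st sg hst_inv h]
    simp only [mul_assoc]
  unfold psi
  rw [e, LinearMap.trace_mul_comm, mul_assoc, r_sq, mul_one]

theorem psi_comm (hst_inv : ∀ w, st (st w) = w) (h : ∀ i, st (cs.simple i) = cs.simple (sg i))
    (w : W) (hw : st w = w⁻¹) (i : B) (hi : cs.length (cs.simple i * w) < cs.length w)
    (hc : cs.simple i * w = w * st (cs.simple i)) :
    psi cs sg w = psi cs sg (cs.simple i * w) + 1 := by
  have hd := right_desc cs st sg hst_inv h w hw i hi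
  rw [h] at hc
  have hroot := root_of_comm cs w i (sg i) hd hc
  have hs := sg_sg cs st sg hst_inv h
  have e : rho cs (cs.simple i * w) * theta sg = rho cs w * theta sg -
      ((F M (al i)).comp (rho cs w * theta sg)).smulRight (al i) := by
    rw [map_mul, rho_simple]
    rfl
  unfold psi
  rw [e, map_sub, LinearMap.trace_smulRight, LinearMap.comp_apply, Module.End.mul_apply,
    theta_al sg hs, hroot, map_neg, F_self]
  ring

theorem tw_comm (w : W) (hw : st w = w⁻¹) (i : B)
    (hc : cs.simple i * w = w * st (cs.simple i)) (hst_inv : ∀ w, st (st w) = w) :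
    st (cs.simple i * w) = (cs.simple i * w)⁻¹ := by
  have : (st (cs.simple i))⁻¹ = st (cs.simple i) := by rw [← map_inv, cs.inv_simple]
  rw [map_mul, hw, hc, mul_inv_rev, this]

theorem tw_conj (w : W) (hw : st w = w⁻¹) (i : B) (hst_inv : ∀ w, st (st w) = w) :
    st (cs.simple i * w * st (cs.simple i)) = (cs.simple i * w * st (cs.simple i))⁻¹ := by
  have : (st (cs.simple i))⁻¹ = st (cs.simple i) := by rw [← map_inv, cs.inv_simple]
  rw [map_mul, map_mul, hw, hst_inv, mul_inv_rev, mul_inv_rev, this, cs.inv_simple, mul_assoc]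

theorem len_conj (hst_inv : ∀ w, st (st w) = w) (h : ∀ i, st (cs.simple i) = cs.simple (sg i))
    (w : W) (hw : st w = w⁻¹) (i : B) (hi : cs.length (cs.simple i * w) < cs.length w)
    (hc : cs.simple i * w ≠ w * st (cs.simple i)) :
    cs.length (cs.simple i * w * st (cs.simple i)) < cs.length w := by
  have hd := right_desc cs st sg hst_inv h w hw i hi
  rw [h] at hc ⊢
  by_contra hcon
  apply hc
  apply lift_prop cs w i (sg i) hd
  unfold CoxeterSystem.IsRightDescent
  omega

theorem psi_nat (hst_inv : ∀ w, st (st w) = w) (h : ∀ i, st (cs.simple i) = cs.simple (sg i))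
    (n : ℕ) : ∀ w : W, cs.length w = n → st w = w⁻¹ → ∃ k : ℕ, psi cs sg w = k := by
  induction n using Nat.strong_induction_on with
  | _ n IH =>
  intro w hn hw
  by_cases hw1 : w = 1
  · subst hw1; exact ⟨0, by simp [psi_one]⟩
  obtain ⟨i, hi⟩ := cs.exists_leftDescent_of_ne_one hw1
  unfold CoxeterSystem.IsLeftDescent at hi
  by_cases hc : cs.simple i * w = w * st (cs.simple i)
  · obtain ⟨k, hk⟩ := IH _ (hn ▸ hi) _ rfl (tw_comm cs st w hw i hc hst_inv)
    exact ⟨k + 1, by rw [psi_comm cs st sg hst_inv h w hw i hi hc, hk]; push_cast; rfl⟩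
  · obtain ⟨k, hk⟩ := IH _ (hn ▸ len_conj cs st sg hst_inv h w hw i hi hc) _ rfl
      (tw_conj cs st w hw i hst_inv)
    exact ⟨k, by rw [← hk, psi_conj cs st sg hst_inv h]⟩

end twist

end rep

end CoxAux


/-- Let `(W, S)` be a Coxeter group with `S` finite, and `st` an involutive
automorphism of `W` preserving the set of simple reflections.  Let
`I_* = {w : st w = w⁻¹}` be the set of twisted involutions.  Then there is a unique function
`φ : I_* → ℕ` with `φ(1) = 0` such that for every `w ∈ I_*` and simple reflection `s` with
`sw < w` (equivalently `ℓ(sw) < ℓ(w)`): `φ(w) = φ(sw) + 1` if `sw = w s*`, and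
`φ(w) = φ(s w s*)` if `sw ≠ w s*`. -/
theorem statement0 {B W : Type} [Group W] [Finite B] {M : CoxeterMatrix B}
    (cs : CoxeterSystem M W) (st : W ≃* W)
    (hst_inv : ∀ w, st (st w) = w)
    (hst_S : ∀ i : B, ∃ j : B, st (cs.simple i) = cs.simple j) :
    ∃! φ : {w : W // st w = w⁻¹} → ℕ,
      (∀ h1 : st (1 : W) = (1 : W)⁻¹, φ ⟨1, h1⟩ = 0) ∧
      (∀ w : {w : W // st w = w⁻¹}, ∀ i : B,
        cs.length (cs.simple i * w.1) < cs.length w.1 →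
        ((cs.simple i * w.1 = w.1 * st (cs.simple i) →
            ∀ h : st (cs.simple i * w.1) = (cs.simple i * w.1)⁻¹,
              φ w = φ ⟨cs.simple i * w.1, h⟩ + 1) ∧
         (cs.simple i * w.1 ≠ w.1 * st (cs.simple i) →
            ∀ h : st (cs.simple i * w.1 * st (cs.simple i)) =
                (cs.simple i * w.1 * st (cs.simple i))⁻¹,
              φ w = φ ⟨cs.simple i * w.1 * st (cs.simple i), h⟩))) := by
  classical
  haveI := Fintype.ofFinite B
  choose sg h using hst_S
  choose g hg using fun w : {w : W // st w = w⁻¹} =>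
    CoxAux.psi_nat cs st sg hst_inv h _ w.1 rfl w.2
  refine ⟨g, ⟨fun h1 => ?_, fun w i hi => ⟨fun hc hh => ?_, fun hc hh => ?_⟩⟩, ?_⟩
  · have := hg ⟨1, h1⟩
    rw [CoxAux.psi_one] at this
    exact_mod_cast this.symm
  · have h1 := CoxAux.psi_comm cs st sg hst_inv h w.1 w.2 i hi hc
    rw [hg w, hg ⟨_, hh⟩] at h1
    exact_mod_cast h1
  · have h1 := CoxAux.psi_conj cs st sg hst_inv h w.1 i
    rw [hg w, hg ⟨_, hh⟩] at h1
    exact_mod_cast h1.symm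
  · rintro f ⟨f1, f2⟩
    have key : ∀ n : ℕ, ∀ w : {w : W // st w = w⁻¹}, cs.length w.1 = n →
        (f w : ℝ) = CoxAux.psi cs sg w.1 := by
      intro n
      induction n using Nat.strong_induction_on with
      | _ n IH =>
      rintro ⟨w, hw⟩ hn
      by_cases hw1 : w = 1
      · subst hw1
        rw [f1 hw, CoxAux.psi_one]; simp
      obtain ⟨i, hi⟩ := cs.exists_leftDescent_of_ne_one hw1
      unfold CoxeterSystem.IsLeftDescent at hi
      by_cases hc : cs.simple i * w = w * st (cs.simple i)
      · have ht := CoxAux.tw_comm cs st w hw i hc hst_inv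
        rw [(f2 ⟨w, hw⟩ i hi).1 hc ht, CoxAux.psi_comm cs st sg hst_inv h w hw i hi hc,
          ← IH _ (hn ▸ hi) ⟨_, ht⟩ rfl]
        push_cast; rfl
      · have ht := CoxAux.tw_conj cs st w hw i hst_inv
        rw [(f2 ⟨w, hw⟩ i hi).2 hc ht,
          IH _ (hn ▸ CoxAux.len_conj cs st sg hst_inv h w hw i hi hc) ⟨_, ht⟩ rfl]
        exact CoxAux.psi_conj cs st sg hst_inv h w i
    funext w
    have := key _ w rfl
    rw [hg w] at this
    exact_mod_cast this
end

section
/- There exists a unique collection of polynomials X^z_y ∈ ℤ[u], indexed by pairs (z,y) ∈ I_* × W, such that X^z_1 = δ_{z,1} for all z ∈ I_*, and for any s ∈ S, y ∈ W with y > ys, and z ∈ I_*: X^z_y = u X^z_{ys} + (u+1) X^{sz}_{ys} if sz = zs* > z; X^z_y = (u²−u−1) X^z_{ys} + (u²−u) X^{sz}_{ys} if sz = zs* < z; X^z_y = X^{szs*}_{ys} if sz ≠ zs* > z; X^z_y = (u²−1) X^z_{ys} + u² X^{szs*}_{ys} if sz ≠ zs* < z. Moreover X^z_y ∈ u^{l(z)}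 ℤ[u] for all (z,y). -/
open Polynomial
open scoped Classical

/-- The characterization (Proposition 1.2) of the polynomials `X^z_y ∈ ℤ[u]`, indexed by pairs
`(z, y)` with `z` a twisted involution (`st z = z⁻¹`) and `y ∈ W`: `X^z_1 = δ_{z,1}`, and for
`s ∈ S`, `y > ys`, the recursions 1.2(i)–(iv) hold. -/
def XRec {B W : Type} [Group W] {M : CoxeterMatrix B} (cs : CoxeterSystem M W)
    (st : W ≃* W) (P : {z : W // st z = z⁻¹} → W → Polynomial ℤ) : Prop :=
  (∀ z : {z : W // st z = z⁻¹}, P z 1 = if z.1 = 1 then 1 else 0) ∧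
  ∀ (i : B) (y : W), cs.length (y * cs.simple i) < cs.length y →
    ∀ z : {z : W // st z = z⁻¹},
      (cs.simple i * z.1 = z.1 * st (cs.simple i) →
        cs.length z.1 < cs.length (cs.simple i * z.1) →
        ∀ h : st (cs.simple i * z.1) = (cs.simple i * z.1)⁻¹,
          P z y = X * P z (y * cs.simple i) +
            (X + 1) * P ⟨cs.simple i * z.1, h⟩ (y * cs.simple i)) ∧
      (cs.simple i * z.1 = z.1 * st (cs.simple i) →
        cs.length (cs.simple i * z.1) < cs.length z.1 →
        ∀ h : st (cs.simple i * z.1) = (cs.simple i * z.1)⁻¹,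
          P z y = (X ^ 2 - X - 1) * P z (y * cs.simple i) +
            (X ^ 2 - X) * P ⟨cs.simple i * z.1, h⟩ (y * cs.simple i)) ∧
      (cs.simple i * z.1 ≠ z.1 * st (cs.simple i) →
        cs.length z.1 < cs.length (cs.simple i * z.1) →
        ∀ h : st (cs.simple i * z.1 * st (cs.simple i)) =
            (cs.simple i * z.1 * st (cs.simple i))⁻¹,
          P z y = P ⟨cs.simple i * z.1 * st (cs.simple i), h⟩ (y * cs.simple i)) ∧
      (cs.simple i * z.1 ≠ z.1 * st (cs.simple i) →
        cs.length (cs.simple i * z.1) < cs.length z.1 →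
        ∀ h : st (cs.simple i * z.1 * st (cs.simple i)) =
            (cs.simple i * z.1 * st (cs.simple i))⁻¹,
          P z y = (X ^ 2 - 1) * P z (y * cs.simple i) +
            X ^ 2 * P ⟨cs.simple i * z.1 * st (cs.simple i), h⟩ (y * cs.simple i))

open Polynomial
open scoped Classical

namespace LV

section Exchange
variable {B W : Type} [Group W] {M : CoxeterMatrix B} (cs : CoxeterSystem M W)

/-- the action of a simple reflection on signed elements -/
noncomputable def phi (i : B) : Function.End (W × ZMod 2) := fun p =>
  (cs.simple i * p.1 * cs.simple i, p.2 + if p.1 = cs.simple i then 1 else 0)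

theorem end_mul_apply {α : Type} (f g : Function.End α) (x : α) : (f * g) x = f (g x) := rfl

theorem phi_pow (i j : B) (n : ℕ) (p : W × ZMod 2) :
    ((phi cs i * phi cs j) ^ n) p =
      ((cs.simple i * cs.simple j) ^ n * p.1 * ((cs.simple i * cs.simple j) ^ n)⁻¹,
        p.2 + ∑ k ∈ Finset.range (2 * n),
          if p.1 = cs.simple j * (cs.simple i * cs.simple j) ^ k then 1 else 0) := by
  induction n with
  | zero => simp [Function.End.one_def]
  | succ n ih =>
    set r := cs.simple i * cs.simple j with hr
    have hrinv : r⁻¹ = cs.simple j * cs.simple i := by simp [hr]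
    have hc : ∀ k : ℕ, cs.simple j * r ^ k = (r ^ k)⁻¹ * cs.simple j := by
      intro k
      induction k with
      | zero => simp
      | succ k ihk =>
        rw [pow_succ, ← mul_assoc, ihk, ← pow_succ, pow_succ', mul_inv_rev, hrinv, mul_assoc,
          mul_assoc, mul_assoc]
    have e1 : (r ^ n * p.1 * (r ^ n)⁻¹ = cs.simple j) ↔ p.1 = cs.simple j * r ^ (2 * n) := by
      rw [two_mul, pow_add, ← mul_assoc, hc]
      constructor
      · intro h; rw [← h]; group
      · intro h; rw [h]; group
    have e2 : (cs.simple j * (r ^ n * p.1 * (r ^ n)⁻¹) * cs.simple j = cs.simple i) ↔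
        p.1 = cs.simple j * r ^ (2 * n + 1) := by
      have : cs.simple j * r ^ (2 * n + 1) = (r ^ n)⁻¹ * (cs.simple j * cs.simple i * cs.simple j) * r ^ n := by
        rw [show 2 * n + 1 = n + 1 + n by ring, pow_add, pow_add, ← mul_assoc, ← mul_assoc, hc]
        simp [hr, mul_assoc]
      rw [this]
      constructor
      · intro h; rw [← h]; simp [mul_assoc]
      · intro h; rw [h]; simp [mul_assoc]
    rw [pow_succ', end_mul_apply, ih]
    rw [show 2 * (n + 1) = 2 * n + 1 + 1 by ring, Finset.sum_range_succ, Finset.sum_range_succ]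
    rw [end_mul_apply]
    simp only [phi, e1, e2]
    ext
    · simp only [pow_succ', mul_inv_rev, hrinv]
      simp [hr, mul_assoc]
    · simp only [add_assoc]

theorem phi_liftable : M.IsLiftable (phi cs) := by
  intro i j
  funext p
  rw [phi_pow, cs.simple_mul_simple_pow, two_mul, Finset.sum_range_add]
  simp [pow_add, cs.simple_mul_simple_pow, CharTwo.add_self_eq_zero, Function.End.one_def]

noncomputable def Phi : W →* Function.End (W × ZMod 2) := cs.lift ⟨phi cs, phi_liftable cs⟩

theorem Phi_simple (i : B) : Phi cs (cs.simple i) = phi cs i := cs.lift_apply_simple _ _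

theorem Phi_word (ω : List B) (t : W) :
    Phi cs (cs.wordProd ω) (t, 0) =
      (cs.wordProd ω * t * (cs.wordProd ω)⁻¹, ((cs.rightInvSeq ω).count t : ZMod 2)) := by
  induction ω with
  | nil => simp [Function.End.one_def]
  | cons i ω ih =>
    rw [cs.wordProd_cons, map_mul, end_mul_apply, ih, Phi_simple]
    simp only [phi, CoxeterSystem.rightInvSeq, List.count_cons]
    have : (cs.wordProd ω * t * (cs.wordProd ω)⁻¹ = cs.simple i) ↔
      (((cs.wordProd ω)⁻¹ * cs.simple i * cs.wordProd ω) == t) = true := by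
      rw [beq_iff_eq]
      constructor
      · intro h; rw [← h]; group
      · intro h; rw [← h]; group
    ext
    · simp [mul_assoc]
    · simp only [this]
      push_cast
      rfl

theorem exch_right (ω : List B) (i : B)
    (h : cs.length (cs.wordProd ω * cs.simple i) < cs.length (cs.wordProd ω)) :
    ∃ j < ω.length, cs.wordProd ω * cs.simple i = cs.wordProd (ω.eraseIdx j) := by
  obtain ⟨ω', hω', hw'⟩ := cs.exists_isReduced (cs.wordProd ω * cs.simple i)
  have hw : cs.wordProd (ω'.concat i) = cs.wordProd ω := by
    rw [cs.wordProd_concat, ← hw']; simp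
  have hred : cs.IsReduced (ω'.concat i) := by
    unfold CoxeterSystem.IsReduced
    rw [hw, List.length_concat, ← hω'.eq, ← hw']
    have := cs.isRightDescent_iff.1 h
    omega
  have h1 := Phi_word cs ω (cs.simple i)
  have h2 := Phi_word cs (ω'.concat i) (cs.simple i)
  rw [hw] at h2
  have h3 : ((cs.rightInvSeq ω).count (cs.simple i) : ZMod 2) =
    ((cs.rightInvSeq (ω'.concat i)).count (cs.simple i) : ZMod 2) := by
    have := h1.symm.trans h2
    exact (Prod.mk.inj this).2
  have hmem : cs.simple i ∈ cs.rightInvSeq (ω'.concat i) := by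
    rw [cs.rightInvSeq_concat]; simp
  rw [List.count_eq_one_of_mem hred.nodup_rightInvSeq hmem] at h3
  have hm : cs.simple i ∈ cs.rightInvSeq ω := by
    by_contra hcon
    rw [List.count_eq_zero_of_not_mem hcon] at h3
    revert h3
    decide
  obtain ⟨j, hj, hje⟩ := List.mem_iff_getElem.mp hm
  refine ⟨j, by simpa using hj, ?_⟩
  rw [← cs.wordProd_mul_getD_rightInvSeq, List.getD_eq_getElem _ 1 hj, hje]

theorem exch_left (ω : List B) (i : B)
    (h : cs.length (cs.simple i * cs.wordProd ω) < cs.length (cs.wordProd ω)) :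
    ∃ ω' : List B, ω'.length < ω.length ∧ (cs.simple i * cs.wordProd ω = cs.wordProd ω') ∧
      ∃ j < ω.length, ω' = ω.eraseIdx j := by
  have h' : cs.length (cs.wordProd ω.reverse * cs.simple i) < cs.length (cs.wordProd ω.reverse) := by
    rw [cs.wordProd_reverse, cs.length_inv, ← cs.length_inv]
    simpa using h
  obtain ⟨j, hj, he⟩ := exch_right cs ω.reverse i h'
  rw [List.length_reverse] at hj
  have hE : ω.reverse.eraseIdx j = (ω.eraseIdx (ω.length - 1 - j)).reverse := by
    rw [List.eraseIdx_eq_take_drop_succ, List.eraseIdx_eq_take_drop_succ, List.reverse_append,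
      List.reverse_drop, List.reverse_take,]
    grind
  refine ⟨ω.eraseIdx (ω.length - 1 - j), ?_, ?_, _, ?_, rfl⟩
  · rw [List.length_eraseIdx_of_lt (by omega)]; omega
  · rw [hE, cs.wordProd_reverse, cs.wordProd_reverse] at he
    have := congrArg (·⁻¹) he
    simpa using this
  · omega

/-- Exchange for a product of two words. -/
theorem exch_append (ω₁ ω₂ : List B) (i : B)
    (h : cs.length (cs.simple i * (cs.wordProd ω₁ * cs.wordProd ω₂)) <
      cs.length (cs.wordProd ω₁ * cs.wordProd ω₂)) :
    (∃ j < ω₁.length, cs.simple i * cs.wordProd ω₁ = cs.wordProd (ω₁.eraseIdx j)) ∨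
    (∃ j < ω₂.length, cs.simple i * cs.wordProd ω₁ * cs.wordProd ω₂ =
      cs.wordProd ω₁ * cs.wordProd (ω₂.eraseIdx j)) := by
  rw [← cs.wordProd_append] at h
  obtain ⟨ω', -, he, j, hj, rfl⟩ := exch_left cs _ i h
  by_cases hlt : j < ω₁.length
  · left
    refine ⟨j, hlt, ?_⟩
    rw [List.eraseIdx_append_of_lt_length hlt, cs.wordProd_append, cs.wordProd_append,
      ← mul_assoc] at he
    exact mul_right_cancel he
  · right
    rw [List.length_append] at hj
    refine ⟨j - ω₁.length, by omega, ?_⟩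
    rw [List.eraseIdx_append_of_length_le (by omega), cs.wordProd_append, cs.wordProd_append,
      ← mul_assoc] at he
    exact he

theorem lemQ (x : W) (i j : B) (h1 : cs.length x < cs.length (cs.simple i * x))
    (h2 : cs.length (cs.simple i * (x * cs.simple j)) < cs.length (x * cs.simple j)) :
    cs.simple i * x = x * cs.simple j := by
  obtain ⟨ω, hω, rfl⟩ := cs.exists_isReduced x
  have h2' : cs.length (cs.simple i * (cs.wordProd ω * cs.wordProd [j])) <
      cs.length (cs.wordProd ω * cs.wordProd [j]) := by simpa using h2
  rcases exch_append cs ω [j] i h2' with ⟨k, hk, he⟩ | ⟨k, hk, he⟩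
  · exfalso
    rw [he, hω.eq] at h1
    have := cs.length_wordProd_le (ω.eraseIdx k)
    rw [List.length_eraseIdx_of_lt hk] at this
    omega
  · have : k = 0 := by simpa using hk
    subst this
    simp at he
    have := congrArg (· * cs.simple j) he
    simpa using this

end Exchange
end LV

open Polynomial
open scoped Classical

namespace LV

/-- letter in position `k` (from the right, starting with 0) of the alternating word ending in `e` -/
def lt (k : ℕ) (e : Bool) : Bool := xor e k.bodd

@[simp] theorem lt_zero (e : Bool) : lt 0 e = e := by simp [lt]
theorem lt_succ (k : ℕ) (e : Bool) : lt (k + 1) e = !(lt k e) := by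
  simp [lt]
theorem lt_not (k : ℕ) (e : Bool) : lt k (!e) = !(lt k e) := by
  simp [lt]
theorem lt_lt (k : ℕ) (e : Bool) : lt k (lt k e) = e := by
  simp [lt]
theorem lt_add (a b : ℕ) (e : Bool) : lt (a + b) e = lt a (lt b e) := by
  simp only [lt, Nat.bodd_add]
  cases e <;> cases a.bodd <;> cases b.bodd <;> rfl
theorem lt_two_mul (a : ℕ) (e : Bool) : lt (2 * a) e = e := by
  rw [two_mul, lt_add, lt_lt]

/-- alternating product of `k` factors with rightmost factor `f e` -/
def alt {A : Type*} [Monoid A] (f : Bool → A) : ℕ → Bool → A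
  | 0, _ => 1
  | k + 1, e => f (lt k e) * alt f k e

section alt
variable {A : Type*} [Monoid A] (f : Bool → A)
@[simp] theorem alt_zero (e : Bool) : alt f 0 e = 1 := rfl
theorem alt_succ (k : ℕ) (e : Bool) : alt f (k + 1) e = f (lt k e) * alt f k e := rfl
theorem alt_succ' (k : ℕ) (e : Bool) : alt f (k + 1) e = alt f k (!e) * f e := by
  induction k with
  | zero => simp [alt_succ]
  | succ k ih => rw [alt_succ, ih, alt_succ, lt_succ, lt_not, mul_assoc]
theorem alt_one (e : Bool) : alt f 1 e = f e := by simp [alt_succ]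
theorem alt_add (a b : ℕ) (e : Bool) : alt f (a + b) e = alt f a (lt b e) * alt f b e := by
  induction a with
  | zero => simp
  | succ a ih => rw [show a + 1 + b = a + b + 1 by ring, alt_succ, ih, alt_succ, lt_add, mul_assoc]
theorem alt_two_mul (a : ℕ) (e : Bool) : alt f (2 * a) e = (f (!e) * f e) ^ a := by
  induction a with
  | zero => simp
  | succ a ih =>
    rw [show 2 * (a + 1) = 2 * a + 1 + 1 by ring, alt_succ, alt_succ, ih, lt_succ, lt_two_mul,
      pow_succ', mul_assoc]
end alt

section altW
variable {W : Type} [Group W] (s : Bool → W)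

theorem s_mul_alt_pos (hs : ∀ e, s e * s e = 1) (k : ℕ) (e : Bool) : s (lt k e) * alt s (k + 1) e = alt s k e := by
  rw [alt_succ, ← mul_assoc, hs, one_mul]

theorem alt_mul_s (hs : ∀ e, s e * s e = 1) (k : ℕ) (e : Bool) : alt s (k + 1) e * s e = alt s k (!e) := by
  rw [alt_succ', mul_assoc, hs, mul_one]

theorem s_inv (hs : ∀ e, s e * s e = 1) (e : Bool) : (s e)⁻¹ = s e := inv_eq_of_mul_eq_one_right (hs e)

theorem alt_inv (hs : ∀ e, s e * s e = 1) (k : ℕ) (e : Bool) : (alt s k e)⁻¹ = alt s k (!(lt k e)) := by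
  induction k with
  | zero => simp
  | succ k ih => rw [alt_succ, mul_inv_rev, ih, s_inv s hs, alt_succ', lt_succ]; simp

theorem pow_swap (hs : ∀ e, s e * s e = 1) (a : ℕ) (e : Bool) (h : (s (!e) * s e) ^ a = 1) (d : Bool) :
    (s (!d) * s d) ^ a = 1 := by
  by_cases hd : d = e
  · rw [hd]; exact h
  · have : e = !d := by cases d <;> cases e <;> simp_all
    subst this
    have h2 := congrArg (·⁻¹) h
    simpa [← inv_pow, mul_inv_rev, s_inv s hs] using h2

theorem alt_braid (hs : ∀ e, s e * s e = 1) (m : ℕ) (hm : (s false * s true) ^ m = 1) (e : Bool) :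
    alt s m e = alt s m (!e) := by
  rw [← mul_inv_eq_one, alt_inv s hs, lt_not, Bool.not_not]
  have := alt_add s m m (lt m e)
  rw [lt_lt] at this
  rw [← this, ← two_mul, alt_two_mul]
  exact pow_swap s hs m true hm _

theorem alt_odd_ne_one (hs : ∀ e, s e * s e = 1) (h1 : ∀ e, s e ≠ 1) (k : ℕ) (e : Bool) : alt s (2 * k + 1) e ≠ 1 := by
  induction k generalizing e with
  | zero => simpa [alt_succ] using h1 e
  | succ k ih =>
    intro h
    rw [show 2 * (k + 1) + 1 = 2 * k + 1 + 1 + 1 by ring, alt_succ', alt_succ, lt_succ, lt_not,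
      Bool.not_not, lt_two_mul] at h
    apply ih (!e)
    calc alt s (2 * k + 1) (!e)
        = (s e * s e) * alt s (2 * k + 1) (!e) * (s e * s e) := by rw [hs]; simp
      _ = s e * (s e * alt s (2 * k + 1) (!e) * s e) * s e := by simp only [mul_assoc]
      _ = 1 := by rw [h, mul_one, hs]
end altW

section dih
variable {B W : Type} [Group W] {M : CoxeterMatrix B} (cs : CoxeterSystem M W)
  (i : Bool → B)

/-- value of a word in the two letters -/
def pw (L : List Bool) : W := cs.wordProd (L.map i)

/-- word of minimal length among the words in the two letters -/
def JRed (L : List Bool) : Prop := ∀ L' : List Bool, pw cs i L' = pw cs i L → L.length ≤ L'.length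

abbrev ss (e : Bool) : W := cs.simple (i e)

theorem pw_nil : pw cs i [] = 1 := by simp [pw]
theorem pw_cons (e : Bool) (L : List Bool) : pw cs i (e :: L) = cs.simple (i e) * pw cs i L := by
  simp [pw, cs.wordProd_cons]
theorem pw_append (L L' : List Bool) : pw cs i (L ++ L') = pw cs i L * pw cs i L' := by
  simp [pw, cs.wordProd_append]
theorem pw_reverse (L : List Bool) : pw cs i L.reverse = (pw cs i L)⁻¹ := by
  simp [pw]

theorem ss_sq (e : Bool) : ss cs i e * ss cs i e = 1 := cs.simple_mul_simple_self _

theorem exists_JRed (L : List Bool) : ∃ L', pw cs i L' = pw cs i L ∧ JRed cs i L' := by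
  have hex : ∃ n, ∃ L' : List Bool, pw cs i L' = pw cs i L ∧ L'.length = n := ⟨_, L, rfl, rfl⟩
  obtain ⟨L', h1, h2⟩ := Nat.find_spec hex
  refine ⟨L', h1, fun L'' h => ?_⟩
  rw [h2]
  exact Nat.find_min' hex ⟨L'', h.trans h1, rfl⟩

theorem JRed.tail {e : Bool} {L : List Bool} (h : JRed cs i (e :: L)) : JRed cs i L := by
  intro L' hL'
  have := h (e :: L') (by rw [pw_cons, pw_cons, hL'])
  simpa using this

theorem length_min (x : W) (hx : ∀ L, cs.length x ≤ cs.length (pw cs i L * x)) (L : List Bool)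
    (hL : JRed cs i L) : cs.length (pw cs i L * x) = L.length + cs.length x := by
  induction L with
  | nil => simp [pw_nil]
  | cons e L ih =>
    have ihL := ih hL.tail
    rw [pw_cons, mul_assoc]
    rcases cs.length_simple_mul (pw cs i L * x) (i e) with h | h
    · rw [h, ihL, List.length_cons]; ring
    · exfalso
      obtain ⟨ω, hω, hxω⟩ := cs.exists_isReduced x
      have hlt : cs.length (cs.simple (i e) * (cs.wordProd (L.map i) * cs.wordProd ω)) <
          cs.length (cs.wordProd (L.map i) * cs.wordProd ω) := by
        rw [← hxω]; change cs.length (cs.simple (i e) * (pw cs i L * x)) < cs.length (pw cs i L * x)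
        omega
      rcases exch_append cs _ _ _ hlt with ⟨j, hj, he⟩ | ⟨j, hj, he⟩
      · rw [List.eraseIdx_map] at he
        have := hL (L.eraseIdx j) (by rw [pw_cons]; exact he.symm)
        rw [List.length_map] at hj
        rw [List.length_eraseIdx_of_lt hj, List.length_cons] at this
        omega
      · have h2 := hx (L.reverse ++ e :: L)
        rw [pw_append, pw_cons, pw_reverse, mul_assoc] at h2
        rw [← hxω] at he
        change cs.simple (i e) * pw cs i L * x = pw cs i L * _ at he
        rw [he, inv_mul_cancel_left] at h2
        have h3 := cs.length_wordProd_le (ω.eraseIdx j)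
        rw [List.length_eraseIdx_of_lt hj] at h3
        rw [hxω, hω.eq] at h2
        omega

theorem exists_min (x : W) : ∃ L x0, x = pw cs i L * x0 ∧ JRed cs i L ∧
    (∀ L, cs.length x0 ≤ cs.length (pw cs i L * x0)) := by
  have hex : ∃ n, ∃ L : List Bool, cs.length (pw cs i L * x) = n := ⟨_, [], rfl⟩
  obtain ⟨L, hL⟩ := Nat.find_spec hex
  obtain ⟨L', h1, h2⟩ := exists_JRed cs i L.reverse
  refine ⟨L', pw cs i L * x, ?_, h2, ?_⟩
  · rw [h1, pw_reverse, inv_mul_cancel_left]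
  · intro L''
    rw [hL]
    exact Nat.find_min' hex ⟨L'' ++ L, by rw [pw_append, mul_assoc]⟩

theorem min_of_no_desc (x : W) (hx : ∀ e, cs.length x < cs.length (ss cs i e * x)) :
    ∀ L, cs.length x ≤ cs.length (pw cs i L * x) := by
  obtain ⟨L, x0, rfl, hL, hmin⟩ := exists_min cs i x
  cases L with
  | nil => simpa [pw_nil] using hmin
  | cons e L =>
    exfalso
    have h1 := length_min cs i x0 hmin _ hL
    have h2 := length_min cs i x0 hmin _ hL.tail
    have h3 := hx e
    rw [h1, pw_cons, mul_assoc, cs.simple_mul_simple_cancel_left, h2, List.length_cons] at h3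
    omega

/-- the alternating word as a list -/
def altL : ℕ → Bool → List Bool
  | 0, _ => []
  | k + 1, e => lt k e :: altL k e

theorem pw_altL (k : ℕ) (e : Bool) : pw cs i (altL k e) = alt (ss cs i) k e := by
  induction k with
  | zero => simp [altL, pw_nil]
  | succ k ih => rw [altL, pw_cons, ih, alt_succ]

theorem altL_length (k : ℕ) (e : Bool) : (altL k e).length = k := by
  induction k with
  | zero => rfl
  | succ k ih => simp [altL, ih]

theorem pw_eq_alt (L : List Bool) : ∃ k ≤ L.length, ∃ e, pw cs i L = alt (ss cs i) k e := by
  induction L with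
  | nil => exact ⟨0, le_rfl, false, by simp [pw_nil]⟩
  | cons d L ih =>
    obtain ⟨k, hk, e, he⟩ := ih
    rw [pw_cons, he]
    cases k with
    | zero => exact ⟨1, by simp, d, by simp [alt_succ]⟩
    | succ k =>
      by_cases hd : d = lt k e
      · refine ⟨k, by simp; omega, e, ?_⟩
        rw [hd]; exact s_mul_alt_pos _ (ss_sq cs i) k e
      · refine ⟨k + 2, by simp; omega, e, ?_⟩
        have : d = lt (k + 1) e := by rw [lt_succ]; cases d <;> cases h : lt k e <;> simp_all
        rw [this, alt_succ _ (k + 1)]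

theorem ss_ne_one (e : Bool) : ss cs i e ≠ 1 := by
  intro h
  have := cs.length_simple (i e)
  rw [show cs.simple (i e) = 1 from h, cs.length_one] at this
  omega

/-- the order of the product of the two generators -/
noncomputable def mm : ℕ := orderOf (ss cs i false * ss cs i true)

theorem mm_pow : (ss cs i false * ss cs i true) ^ mm cs i = 1 := pow_orderOf_eq_one _

theorem mm_le (a : ℕ) (ha : 0 < a) (e : Bool) (h : alt (ss cs i) a e = 1) :
    mm cs i ≠ 0 ∧ 2 * mm cs i ≤ a := by
  rcases Nat.even_or_odd' a with ⟨b, rfl | rfl⟩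
  · rw [alt_two_mul] at h
    have h2 := pow_swap _ (ss_sq cs i) b e h true
    have h3 := orderOf_dvd_of_pow_eq_one h2
    change mm cs i ∣ b at h3
    have hb : 0 < b := by omega
    exact ⟨fun h0 => by rw [h0] at h3; have := Nat.eq_zero_of_zero_dvd h3; omega,
      by have := Nat.le_of_dvd hb h3; omega⟩
  · exact absurd h (alt_odd_ne_one _ (ss_sq cs i) (ss_ne_one cs i) b e)

theorem JRed_altL (k : ℕ) (e : Bool) (hk : k ≤ mm cs i ∨ mm cs i = 0) : JRed cs i (altL k e) := by
  intro L hL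
  rw [altL_length]
  by_contra hlt
  obtain ⟨j, hj, d, hd⟩ := pw_eq_alt cs i L
  rw [hL, pw_altL] at hd
  by_cases hde : d = e
  · subst hde
    have h1 := alt_add (ss cs i) (k - j) j d
    rw [Nat.sub_add_cancel (by omega), hd] at h1
    have h2 : alt (ss cs i) (k - j) (lt j d) = 1 := by simpa using h1.symm
    have := mm_le cs i _ (by omega) _ h2
    omega
  · have hde' : d = !e := by cases d <;> cases e <;> simp_all
    rw [← mul_inv_eq_one, alt_inv _ (ss_sq cs i), hde', lt_not, Bool.not_not] at hd
    have h1 := alt_add (ss cs i) k j (lt j e)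
    rw [lt_lt, hd] at h1
    have := mm_le cs i _ (by omega) _ h1
    omega

theorem length_alt (x : W) (hx : ∀ e, cs.length x < cs.length (ss cs i e * x)) (k : ℕ) (e : Bool)
    (hk : k ≤ mm cs i ∨ mm cs i = 0) :
    cs.length (alt (ss cs i) k e * x) = k + cs.length x := by
  rw [← pw_altL, length_min cs i x (min_of_no_desc cs i x hx) _ (JRed_altL cs i k e hk),
    altL_length]

theorem length_pw_one (x : W) (hx : ∀ e, cs.length x < cs.length (ss cs i e * x)) (L : List Bool)
    (h : cs.length (pw cs i L * x) = cs.length x + 1) : ∃ e, pw cs i L = ss cs i e := by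
  obtain ⟨L', h1, h2⟩ := exists_JRed cs i L
  rw [← h1, length_min cs i x (min_of_no_desc cs i x hx) _ h2] at h
  rw [← h1]
  match L', h with
  | [e], _ => exact ⟨e, by rw [pw_cons, pw_nil, mul_one]⟩
  | [], h => simp at h
  | _ :: _ :: _, h => simp at h; omega

theorem both_desc (y : W) (hy : ∀ e, cs.length (ss cs i e * y) < cs.length y) :
    mm cs i ≠ 0 ∧ ∃ y1, (∀ e, y = alt (ss cs i) (mm cs i) e * y1) ∧
      cs.length y = mm cs i + cs.length y1 := by
  obtain ⟨L, x0, rfl, hL, hmin⟩ := exists_min cs i y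
  obtain ⟨k, hk, e, he⟩ := pw_eq_alt cs i L
  have hk' : k = L.length := by
    have := hL (altL k e) (by rw [pw_altL, he])
    rw [altL_length] at this
    omega
  rw [he] at hy ⊢
  have hJ : JRed cs i (altL k e) := by
    intro L' hL'
    rw [altL_length, hk']
    exact hL L' (by rw [hL', pw_altL, he])
  have hlen : ∀ j d, JRed cs i (altL j d) → cs.length (alt (ss cs i) j d * x0) = j + cs.length x0 := by
    intro j d hj
    rw [← pw_altL, length_min cs i x0 hmin _ hj, altL_length]
  have hmk : mm cs i ≠ 0 ∧ mm cs i ≤ k := by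
    by_contra hcon
    have hk1 : k + 1 ≤ mm cs i ∨ mm cs i = 0 := by omega
    have h1 := hlen _ _ (JRed_altL cs i (k + 1) e hk1)
    have h2 := hy (lt k e)
    rw [← mul_assoc, ← alt_succ, h1, hlen _ _ hJ] at h2
    omega
  refine ⟨hmk.1, alt (ss cs i) (k - mm cs i) e * x0, ?_, ?_⟩
  · have h1 := alt_add (ss cs i) (mm cs i) (k - mm cs i) e
    rw [Nat.add_sub_cancel' hmk.2] at h1
    have hb := alt_braid _ (ss_sq cs i) _ (mm_pow cs i)
    intro d
    rw [h1, mul_assoc]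
    by_cases hd : d = lt (k - mm cs i) e
    · rw [hd]
    · rw [hb]; congr 2
      revert hd
      generalize lt (k - mm cs i) e = x
      cases d <;> cases x <;> simp
  · have hJ' : ∀ a, JRed cs i (altL (a + (k - mm cs i)) e) → JRed cs i (altL (k - mm cs i) e) := by
      intro a
      induction a with
      | zero => simp
      | succ a ih =>
        intro h
        rw [show a + 1 + (k - mm cs i) = a + (k - mm cs i) + 1 by ring, altL] at h
        exact ih h.tail
    rw [hlen _ _ hJ, hlen _ _ (hJ' (mm cs i) (by rw [Nat.add_sub_cancel' hmk.2]; exact hJ))]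
    omega

end dih
end LV

open Polynomial
open scoped Classical

namespace LV
section mats
variable {B W : Type} [Group W] {M : CoxeterMatrix B} (cs : CoxeterSystem M W)
  {A : Type*} [Monoid A] (T : B → A)

theorem prod_altL (i : Bool → B) (k : ℕ) (e : Bool) :
    (((altL k e).map i).map T).prod = alt (fun d => T (i d)) k e := by
  induction k with
  | zero => simp [altL]
  | succ k ih => simp only [altL, List.map_cons, List.prod_cons, ih, alt_succ]

theorem matsumoto (ha : ∀ i j, cs.simple i = cs.simple j → T i = T j)
    (hb : ∀ i : Bool → B, ss cs i false ≠ ss cs i true → mm cs i ≠ 0 →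
      alt (fun d => T (i d)) (mm cs i) false = alt (fun d => T (i d)) (mm cs i) true)
    (n : ℕ) : ∀ ω ω' : List B, ω.length = n → cs.IsReduced ω → cs.IsReduced ω' →
      cs.wordProd ω = cs.wordProd ω' → (ω.map T).prod = (ω'.map T).prod := by
  induction n with
  | zero =>
    intro ω ω' hn h h' he
    have : ω'.length = 0 := by rw [← h'.eq, ← he, h.eq, hn]
    rw [List.eq_nil_of_length_eq_zero hn, List.eq_nil_of_length_eq_zero this]
  | succ n ih =>
    intro ω ω' hn h h' he
    have hn' : ω'.length = n + 1 := by rw [← h'.eq, ← he, h.eq, hn]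
    match ω, ω', hn, hn' with
    | a :: ω, b :: ω', hn, hn' =>
    simp only [List.length_cons, Nat.add_right_cancel_iff] at hn hn'
    have hr : cs.IsReduced ω := by simpa using h.drop 1
    have hr' : cs.IsReduced ω' := by simpa using h'.drop 1
    rw [cs.wordProd_cons, cs.wordProd_cons] at he
    rw [List.map_cons, List.map_cons, List.prod_cons, List.prod_cons]
    by_cases hab : cs.simple a = cs.simple b
    · rw [hab] at he
      rw [ha a b hab, ih ω ω' hn hr hr' (mul_left_cancel he)]
    set i : Bool → B := fun e => if e then b else a with hi
    set y := cs.simple a * cs.wordProd ω with hy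
    have hly : cs.length y = n + 1 := by
      rw [hy, ← cs.wordProd_cons, h.eq]; simp [hn]
    have hdesc : ∀ e, cs.length (ss cs i e * y) < cs.length y := by
      intro e
      cases e
      · simp only [ss, hi, hy, Bool.false_eq_true, if_false,
          cs.simple_mul_simple_cancel_left]
        rw [← hy, hly, hr.eq]; omega
      · simp only [ss, hi, he, if_true, cs.simple_mul_simple_cancel_left]
        rw [← he, hly, hr'.eq]; omega
    obtain ⟨hm, y1, hy1, hl1⟩ := both_desc cs i y hdesc
    obtain ⟨ρ, hρ, hyρ⟩ := cs.exists_isReduced y1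
    have key : ∀ (e : Bool) (c : B) (τ : List B), i e = c → τ.length = n → cs.IsReduced τ →
        y = cs.simple c * cs.wordProd τ →
        T c * (τ.map T).prod = alt (fun d => T (i d)) (mm cs i) (lt (mm cs i - 1) e) *
          (ρ.map T).prod := by
      intro e c τ hc hτ hrτ hyτ
      obtain ⟨k, hk⟩ : ∃ k, mm cs i = k + 1 := ⟨mm cs i - 1, by omega⟩
      have hw : cs.wordProd ((altL k (lt k e)).map i ++ ρ) = cs.wordProd τ := by
        rw [cs.wordProd_append, ← hyρ]
        change pw cs i _ * _ = _
        rw [pw_altL]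
        have h1 := hy1 (lt k e)
        rw [hk, alt_succ, lt_lt, hyτ, hc.symm, mul_assoc] at h1
        exact (mul_left_cancel h1).symm
      have hlen : ((altL k (lt k e)).map i ++ ρ).length = n := by
        rw [List.length_append, List.length_map, altL_length, ← hρ.eq, ← hyρ]
        omega
      have h2 := ih τ _ hτ hrτ (show cs.IsReduced ((altL k (lt k e)).map i ++ ρ) by
        unfold CoxeterSystem.IsReduced
        rw [hw, hlen, hrτ.eq, hτ]) hw.symm
      rw [h2, List.map_append, List.prod_append, prod_altL, ← mul_assoc, hk, Nat.add_sub_cancel,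
        alt_succ, lt_lt, hc]
    rw [key false a ω (by simp [hi]) hn hr hy, key true b ω' (by simp [hi]) hn' hr' he]
    congr 1
    have h3 := hb i (by simpa [ss, hi] using hab) hm
    have : lt (mm cs i - 1) true = !(lt (mm cs i - 1) false) := by rw [← lt_not]; rfl
    rw [this]
    cases lt (mm cs i - 1) false
    · exact h3
    · exact h3.symm
end mats
end LV

open Polynomial
open scoped Classical

namespace LV
section twist
variable {B W : Type} [Group W] {M : CoxeterMatrix B} (cs : CoxeterSystem M W) (st : W ≃* W)

/-- the standing hypotheses on the involution -/
structure HS : Prop where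
  inv : ∀ w, st (st w) = w
  S : ∀ i : B, ∃ j : B, st (cs.simple i) = cs.simple j

variable {cs st}

theorem HS.length_le (H : HS cs st) (w : W) : cs.length (st w) ≤ cs.length w := by
  obtain ⟨ω, hω, rfl⟩ := cs.exists_isReduced w
  rw [hω.eq]
  clear hω
  induction ω with
  | nil => simp
  | cons i ω ih =>
    obtain ⟨j, hj⟩ := H.S i
    rw [cs.wordProd_cons, map_mul, hj, List.length_cons]
    have := cs.length_mul_le (cs.simple j) (st (cs.wordProd ω))
    rw [cs.length_simple] at this
    omega

theorem HS.length (H : HS cs st) (w : W) : cs.length (st w) = cs.length w := by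
  apply le_antisymm (H.length_le w)
  have := H.length_le (st w)
  rwa [H.inv] at this

theorem HS.ss_sq (H : HS cs st) (i : B) : st (cs.simple i) * st (cs.simple i) = 1 := by
  rw [← map_mul, cs.simple_mul_simple_self, map_one]

theorem HS.ss_inv (H : HS cs st) (i : B) : (st (cs.simple i))⁻¹ = st (cs.simple i) := by
  rw [← map_inv, cs.inv_simple]

theorem HS.real_inv (H : HS cs st) {z : W} (hz : st z = z⁻¹) {i : B}
    (h : cs.simple i * z = z * st (cs.simple i)) :
    st (cs.simple i * z) = (cs.simple i * z)⁻¹ := by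
  have h1 : st (cs.simple i) = z⁻¹ * cs.simple i * z := by rw [mul_assoc, h, inv_mul_cancel_left]
  rw [map_mul, hz, h1, mul_inv_rev, cs.inv_simple, mul_inv_cancel_right]

theorem HS.tw_inv (H : HS cs st) {z : W} (hz : st z = z⁻¹) (g : W) :
    st (g * z * (st g)⁻¹) = (g * z * (st g)⁻¹)⁻¹ := by
  rw [map_mul, map_mul, map_inv, H.inv, hz]; group

theorem HS.cplx_inv (H : HS cs st) {z : W} (hz : st z = z⁻¹) (i : B) :
    st (cs.simple i * z * st (cs.simple i)) = (cs.simple i * z * st (cs.simple i))⁻¹ := by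
  have := H.tw_inv hz (cs.simple i)
  rwa [H.ss_inv] at this

theorem HS.length_right (H : HS cs st) {z : W} (hz : st z = z⁻¹) (g : W) :
    cs.length (z * st g) = cs.length (g⁻¹ * z) := by
  rw [← H.length (g⁻¹ * z), map_mul, hz, ← cs.length_inv]
  congr 1
  simp

theorem HS.length_right' (H : HS cs st) {z : W} (hz : st z = z⁻¹) (i : B) :
    cs.length (z * st (cs.simple i)) = cs.length (cs.simple i * z) := by
  rw [H.length_right hz, cs.inv_simple]

theorem HS.cplx_up (H : HS cs st) {z : W} (hz : st z = z⁻¹) {i : B}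
    (h : cs.simple i * z ≠ z * st (cs.simple i)) (hu : cs.length z < cs.length (cs.simple i * z)) :
    cs.length (cs.simple i * z * st (cs.simple i)) = cs.length z + 2 := by
  have h1 := H.length_right' hz i
  obtain ⟨j, hj⟩ := H.S i
  rw [hj] at h h1 ⊢
  have h2 := cs.length_simple_mul (z * cs.simple j) i
  have h3 := cs.length_simple_mul z i
  by_contra hc
  apply h
  apply lemQ cs z i j hu
  rw [mul_assoc] at hc
  omega

theorem HS.cplx_down (H : HS cs st) {z : W} (hz : st z = z⁻¹) {i : B}
    (h : cs.simple i * z ≠ z * st (cs.simple i)) (hu : cs.length (cs.simple i * z) < cs.length z) :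
    cs.length (cs.simple i * z * st (cs.simple i)) + 2 = cs.length z := by
  have h1 := H.length_right' hz i
  obtain ⟨j, hj⟩ := H.S i
  rw [hj] at h h1 ⊢
  have h2 := cs.length_simple_mul (z * cs.simple j) i
  have h3 := cs.length_simple_mul z i
  by_contra hc
  apply h
  have := lemQ cs (cs.simple i * z) i j (by rwa [cs.simple_mul_simple_cancel_left])
    (by rw [mul_assoc, cs.simple_mul_simple_cancel_left]; rw [mul_assoc] at hc; omega)
  rw [cs.simple_mul_simple_cancel_left, mul_assoc] at this
  nth_rw 1 [this]
  rw [cs.simple_mul_simple_cancel_left]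

end twist

section module
variable {B W : Type} [Group W] {M : CoxeterMatrix B} (cs : CoxeterSystem M W) (st : W ≃* W)

/-- basis vectors -/
noncomputable abbrev ba (w : W) : W →₀ ℤ[X] := Finsupp.single w 1

/-- the action of a generator on the basis -/
noncomputable def Tv (i : B) (z : W) : W →₀ ℤ[X] :=
  if st z = z⁻¹ then
    if cs.simple i * z = z * st (cs.simple i) then
      if cs.length z < cs.length (cs.simple i * z) then
        (X : ℤ[X]) • ba z + (X + 1 : ℤ[X]) • ba (cs.simple i * z)
      else (X ^ 2 - X - 1 : ℤ[X]) • ba z + (X ^ 2 - X : ℤ[X]) • ba (cs.simple i * z)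
    else if cs.length z < cs.length (cs.simple i * z) then ba (cs.simple i * z * st (cs.simple i))
      else (X ^ 2 - 1 : ℤ[X]) • ba z + (X ^ 2 : ℤ[X]) • ba (cs.simple i * z * st (cs.simple i))
  else - ba z

/-- the operators -/
noncomputable def TT (i : B) : Module.End ℤ[X] (W →₀ ℤ[X]) :=
  Finsupp.linearCombination ℤ[X] (Tv cs st i)

theorem TT_ba (i : B) (z : W) : TT cs st i (ba z) = Tv cs st i z := by
  simp [TT, ba]

/-- an edge of the twisted-involution graph -/
structure Edge (i : B) (z w : W) (α β : ℤ[X]) : Prop where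
  lo : TT cs st i (ba z) = (α - 1) • ba z + α • ba w
  up : TT cs st i (ba w) = (β - 1) • ba w + β • ba z

variable {cs st}

theorem HS.edge_real (H : HS cs st) {z : W} (hz : st z = z⁻¹) {i : B}
    (h : cs.simple i * z = z * st (cs.simple i)) (hu : cs.length z < cs.length (cs.simple i * z)) :
    Edge cs st i z (cs.simple i * z) (X + 1) (X ^ 2 - X) := by
  constructor
  · rw [TT_ba, Tv, if_pos hz, if_pos h, if_pos hu]
    congr 2; ring
  · rw [TT_ba, Tv, if_pos (H.real_inv hz h), cs.simple_mul_simple_cancel_left, if_pos, if_neg]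
    · omega
    · rw [h, mul_assoc, H.ss_sq, mul_one]

theorem HS.edge_cplx (H : HS cs st) {z : W} (hz : st z = z⁻¹) {i : B}
    (h : cs.simple i * z ≠ z * st (cs.simple i)) (hu : cs.length z < cs.length (cs.simple i * z)) :
    Edge cs st i z (cs.simple i * z * st (cs.simple i)) 1 (X ^ 2) := by
  have h1 := H.cplx_up hz h hu
  have h2 := cs.length_simple_mul z i
  constructor
  · rw [TT_ba, Tv, if_pos hz, if_neg h, if_pos hu]; simp
  · rw [TT_ba, Tv, if_pos (H.cplx_inv hz i), if_neg, if_neg]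
    · congr 3
      rw [mul_assoc, mul_assoc, mul_assoc, H.ss_sq, mul_one, cs.simple_mul_simple_cancel_left]
    · rw [mul_assoc, cs.simple_mul_simple_cancel_left, ← mul_assoc, H.length_right' hz]
      omega
    · rw [mul_assoc, cs.simple_mul_simple_cancel_left, ← mul_assoc, mul_assoc _ _ (st _), H.ss_sq,
        mul_one]
      exact fun h' => h h'.symm

theorem HS.edge_cplx' (H : HS cs st) {z : W} (hz : st z = z⁻¹) {i : B}
    (h : cs.length z + 2 ≤ cs.length (cs.simple i * z * st (cs.simple i))) :
    Edge cs st i z (cs.simple i * z * st (cs.simple i)) 1 (X ^ 2) := by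
  apply H.edge_cplx hz
  · intro h'
    rw [h', mul_assoc, H.ss_sq, mul_one] at h
    omega
  · obtain ⟨j, hj⟩ := H.S i
    rw [hj] at h
    have := cs.length_mul_simple (cs.simple i * z) j
    omega

/-- coefficients of edges -/
def Coef (α β : ℤ[X]) : Prop := (α = X + 1 ∧ β = X ^ 2 - X) ∨ (α = 1 ∧ β = X ^ 2)

theorem HS.exists_up (H : HS cs st) {z : W} (hz : st z = z⁻¹) (i : B)
    (hu : cs.length z < cs.length (cs.simple i * z)) :
    ∃ w α β, st w = w⁻¹ ∧ Coef α β ∧ Edge cs st i z w α β := by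
  by_cases h : cs.simple i * z = z * st (cs.simple i)
  · exact ⟨_, _, _, H.real_inv hz h, Or.inl ⟨rfl, rfl⟩, H.edge_real hz h hu⟩
  · exact ⟨_, _, _, H.cplx_inv hz i, Or.inr ⟨rfl, rfl⟩, H.edge_cplx hz h hu⟩

theorem HS.exists_down (H : HS cs st) {z : W} (hz : st z = z⁻¹) (i : B)
    (hu : cs.length (cs.simple i * z) < cs.length z) :
    ∃ w α β, st w = w⁻¹ ∧ Coef α β ∧ cs.length w < cs.length z ∧ Edge cs st i w z α β := by
  by_cases h : cs.simple i * z = z * st (cs.simple i)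
  · refine ⟨_, _, _, H.real_inv hz h, Or.inl ⟨rfl, rfl⟩, hu, ?_⟩
    have := H.edge_real (H.real_inv hz h) (i := i)
    rw [cs.simple_mul_simple_cancel_left] at this
    refine this ?_ hu
    rw [h, mul_assoc, H.ss_sq, mul_one]
  · have h1 := H.cplx_down hz h hu
    refine ⟨_, _, _, H.cplx_inv hz i, Or.inr ⟨rfl, rfl⟩, by omega, ?_⟩
    have := H.edge_cplx (H.cplx_inv hz i) (i := i)
    have e1 : cs.simple i * (cs.simple i * z * st (cs.simple i)) = z * st (cs.simple i) := by
      rw [mul_assoc, cs.simple_mul_simple_cancel_left]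
    have e2 : cs.simple i * z * st (cs.simple i) * st (cs.simple i) = cs.simple i * z := by
      rw [mul_assoc, H.ss_sq, mul_one]
    rw [e1, e2, mul_assoc z, H.ss_sq, mul_one] at this
    refine this (fun h' => h h'.symm) ?_
    rw [H.length_right' hz]
    have := cs.length_simple_mul z i
    omega

theorem Edge.quad {i : B} {z w : W} {α β : ℤ[X]} (h : Edge cs st i z w α β) (hc : Coef α β) :
    TT cs st i (TT cs st i (ba z)) = (X ^ 2 - 1 : ℤ[X]) • TT cs st i (ba z) + (X ^ 2 : ℤ[X]) • ba z ∧
    TT cs st i (TT cs st i (ba w)) = (X ^ 2 - 1 : ℤ[X]) • TT cs st i (ba w) + (X ^ 2 : ℤ[X]) • ba w := by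
  have hab : β = X ^ 2 + 1 - α := by
    rcases hc with ⟨rfl, rfl⟩ | ⟨rfl, rfl⟩ <;> ring
  subst hab
  constructor
  · rw [h.lo, map_add, map_smul, map_smul, h.lo, h.up]; module
  · rw [h.up, map_add, map_smul, map_smul, h.lo, h.up]; module

theorem HS.quad (H : HS cs st) (i : B) :
    TT cs st i * TT cs st i = (X ^ 2 - 1 : ℤ[X]) • TT cs st i + (X ^ 2 : ℤ[X]) • 1 := by
  apply Finsupp.lhom_ext
  intro z c
  have : Finsupp.single z c = c • ba z := by simp [ba]
  rw [this, map_smul, map_smul]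
  congr 1
  change TT cs st i (TT cs st i (ba z)) = (X ^ 2 - 1 : ℤ[X]) • TT cs st i (ba z) + (X ^ 2 : ℤ[X]) • ba z
  by_cases hz : st z = z⁻¹
  · rcases cs.length_simple_mul z i with h | h
    · obtain ⟨w, α, β, hw, hc, he⟩ := H.exists_up hz i (by omega)
      exact (he.quad hc).1
    · obtain ⟨w, α, β, hw, hc, _, he⟩ := H.exists_down hz i (by omega)
      exact (he.quad hc).2
  · have : TT cs st i (ba z) = - ba z := by rw [TT_ba, Tv, if_neg hz]
    rw [this, map_neg, this]; module

end module

section normal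
variable {A : Type*} [Ring A] [Algebra ℤ[X] A] (T : Bool → A)

theorem normality (hq : ∀ e, T e * T e = (X ^ 2 - 1 : ℤ[X]) • T e + (X ^ 2 : ℤ[X]) • (1 : A))
    (k : ℕ) (e : Bool) :
    (alt T (k + 1) e - alt T (k + 1) (!e)) * T e =
      (X ^ 2 - 1 : ℤ[X]) • (alt T (k + 1) e - alt T (k + 1) (!e)) -
        T (lt (k + 1) e) * (alt T (k + 1) e - alt T (k + 1) (!e)) := by
  have h1 : alt T (k + 1) e * T e = (X ^ 2 - 1 : ℤ[X]) • alt T (k + 1) e +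
      (X ^ 2 : ℤ[X]) • alt T k (!e) := by
    rw [alt_succ', mul_assoc, hq, mul_add, mul_smul_comm, mul_smul_comm, mul_one]
  have h2 : alt T (k + 1) (!e) * T e = T (lt (k + 1) e) * alt T (k + 1) e := by
    rw [← alt_succ, ← alt_succ']
  have h3 : T (lt (k + 1) e) * alt T (k + 1) (!e) = (X ^ 2 - 1 : ℤ[X]) • alt T (k + 1) (!e) +
      (X ^ 2 : ℤ[X]) • alt T k (!e) := by
    have : lt (k + 1) e = lt k (!e) := by rw [lt_succ, lt_not]
    rw [alt_succ, this, ← mul_assoc, hq, add_mul, smul_mul_assoc, smul_mul_assoc, one_mul]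
  rw [sub_mul, mul_sub, h1, h2, h3, smul_sub]
  abel
end normal

section reduce
variable {B W : Type} [Group W] {M : CoxeterMatrix B} {cs : CoxeterSystem M W} {st : W ≃* W}

theorem Coef.ne {α β : ℤ[X]} (h : Coef α β) : α ≠ 0 := by
  rcases h with ⟨rfl, rfl⟩ | ⟨rfl, rfl⟩
  · exact (monic_X_add_C (1 : ℤ)).ne_zero
  · exact one_ne_zero

theorem HS.reduce (H : HS cs st) (i : Bool → B) (hm : mm cs i ≠ 0)
    (hbase : ∀ b, st b = b⁻¹ → (∀ e, cs.length b < cs.length (ss cs i e * b)) →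
      alt (fun e => TT cs st (i e)) (mm cs i) false (ba b) =
      alt (fun e => TT cs st (i e)) (mm cs i) true (ba b)) :
    alt (fun e => TT cs st (i e)) (mm cs i) false = alt (fun e => TT cs st (i e)) (mm cs i) true := by
  obtain ⟨k, hk⟩ : ∃ k, mm cs i = k + 1 := ⟨mm cs i - 1, by omega⟩
  rw [hk] at hbase ⊢
  set T : Bool → Module.End ℤ[X] (W →₀ ℤ[X]) := fun e => TT cs st (i e) with hT
  set D := alt T (k + 1) false - alt T (k + 1) true with hD
  have hnorm : ∀ e v, D v = 0 → D (T e v) = 0 := by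
    intro e v hv
    have h1 := normality T (fun e => H.quad (i e)) k e
    have h2 : (alt T (k + 1) e - alt T (k + 1) (!e)) = D ∨
      (alt T (k + 1) e - alt T (k + 1) (!e)) = - D := by
      cases e
      · left; rfl
      · right; exact (neg_sub (alt T (k + 1) false) (alt T (k + 1) true)).symm
    have h3 := congrArg (fun f => f v) h1
    rcases h2 with h2 | h2 <;>
    · rw [h2] at h3
      simpa [hv] using h3
  have main : ∀ n z, cs.length z = n → st z = z⁻¹ → D (ba z) = 0 := by
    intro n
    induction n using Nat.strong_induction_on with
    | _ n ih =>
      intro z hn hz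
      by_cases hd : ∀ e, cs.length z < cs.length (ss cs i e * z)
      · have := hbase z hz hd
        rw [hD, LinearMap.sub_apply, this, sub_self]
      · push Not at hd
        obtain ⟨e, he⟩ := hd
        have h1 := cs.length_simple_mul z (i e)
        change cs.length (cs.simple (i e) * z) ≤ _ at he
        obtain ⟨w, α, β, hw, hc, hl, hE⟩ := H.exists_down hz (i e) (by omega)
        have hw0 := ih _ (by omega) w rfl hw
        have h2 := hnorm e _ hw0
        rw [hT] at h2
        simp only [hE.lo] at h2
        rw [map_add, map_smul, map_smul, hw0, smul_zero, zero_add] at h2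
        exact (smul_eq_zero.mp h2).resolve_left hc.ne
  apply Finsupp.lhom_ext
  intro z c
  have hc : Finsupp.single z c = c • ba z := by simp [ba]
  rw [hc, map_smul, map_smul]
  congr 1
  by_cases hz : st z = z⁻¹
  · have := main _ z rfl hz
    rw [hD, LinearMap.sub_apply, sub_eq_zero] at this
    exact this
  · have h1 : ∀ e, T e (ba z) = (-1 : ℤ[X]) • ba z := by
      intro e; rw [hT]; simp only [TT_ba, Tv, if_neg hz, neg_smul, one_smul]
    have h2 : ∀ n e, alt T n e (ba z) = (-1 : ℤ[X]) ^ n • ba z := by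
      intro n e
      induction n with
      | zero => simp
      | succ n ih =>
        rw [alt_succ, Module.End.mul_apply, ih, map_smul, h1, smul_smul, pow_succ]
    rw [h2, h2]
end reduce
end LV

open Polynomial
open scoped Classical

namespace LV
section KL
variable {A : Type*} [Ring A] [Algebra ℤ[X] A] (T : Bool → A)

/-- partial sums -/
noncomputable def Sg : ℕ → A
  | 0 => -1
  | k + 1 => Sg k + alt T k false + alt T k true

theorem Sg_succ (k : ℕ) (e : Bool) : Sg T (k + 1) = Sg T k + alt T k e + alt T k (!e) := by
  cases e
  · rfl
  · change Sg T k + alt T k false + alt T k true = Sg T k + alt T k true + alt T k false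
    abel

/-- the Kazhdan-Lusztig type elements -/
noncomputable def KK (k : ℕ) (e : Bool) : A := Sg T k + alt T k e

theorem KK_zero (e : Bool) : KK T 0 e = 0 := by simp [KK, Sg]
theorem KK_one (e : Bool) : KK T 1 e = T e + 1 := by
  rw [KK, Sg_succ T 0 e]; simp [Sg, alt_one, add_comm]

theorem T_Sg (hq : ∀ e, T e * T e = (X ^ 2 - 1 : ℤ[X]) • T e + (X ^ 2 : ℤ[X]) • (1 : A))
    (k : ℕ) (e : Bool) :
    T (lt (k + 1) e) * Sg T (k + 1) = (X ^ 2 : ℤ[X]) • KK T k e + alt T (k + 1) (!e) := by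
  induction k generalizing e with
  | zero => rw [KK_zero, Sg_succ T 0 e]; simp [Sg, alt_one, lt_succ]
  | succ k ih =>
    have h1 := ih (!e)
    have hl : lt (k + 1) (!e) = lt (k + 1 + 1) e := by rw [lt_not, lt_succ (k + 1)]
    have h2 : T (lt (k + 1 + 1) e) * alt T (k + 1) e = (X ^ 2 - 1 : ℤ[X]) • alt T (k + 1) e +
        (X ^ 2 : ℤ[X]) • alt T k e := by
      rw [alt_succ, lt_succ, lt_succ, Bool.not_not, ← mul_assoc, hq, add_mul, smul_mul_assoc,
        smul_mul_assoc, one_mul]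
    have h3 : T (lt (k + 1 + 1) e) * alt T (k + 1) (!e) = alt T (k + 1 + 1) (!e) := by
      rw [alt_succ _ (k + 1), hl]
    rw [Sg_succ T (k + 1) e, mul_add, mul_add, h2, h3, ← hl, h1, Bool.not_not, KK, KK,
      Sg_succ T k e]
    module

theorem KK_rec (hq : ∀ e, T e * T e = (X ^ 2 - 1 : ℤ[X]) • T e + (X ^ 2 : ℤ[X]) • (1 : A))
    (k : ℕ) (e : Bool) :
    KK T (k + 2) e = (T (lt (k + 1) e) + 1) * KK T (k + 1) e - (X ^ 2 : ℤ[X]) • KK T k e := by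
  rw [add_mul, one_mul]
  conv_rhs => rw [KK, mul_add, T_Sg T hq, ← alt_succ]
  rw [KK, Sg_succ T (k + 1) e]
  abel
end KL

section ladder
variable {V : Type*} [AddCommGroup V] [Module ℤ[X] V]

theorem ladder (T : Bool → Module.End ℤ[X] V)
    (hq : ∀ e, T e * T e = (X ^ 2 - 1 : ℤ[X]) • T e + (X ^ 2 : ℤ[X]) • 1)
    (m N : ℕ) (hm : 1 ≤ m) (Lo Up : Bool → ℕ → V) (α β : ℕ → ℤ[X]) (b : V)
    (hlo : ∀ r j, j ≤ N → T r (Lo r j) = (α j - 1) • Lo r j + α j • Up r j)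
    (hup : ∀ r j, j ≤ N → T r (Up r j) = (β j - 1) • Up r j + β j • Lo r j)
    (h0 : ∀ r, Lo r 0 = b) (h1 : ∀ r j, j < N → Lo (!r) (j + 1) = Up r j)
    (h2 : ∀ r, Up (!r) N = Up r N)
    (G : ℕ → ℕ → ℤ[X]) (hG0 : ∀ j ≤ N, G 0 j = 0) (hG1 : G 1 0 = α 0)
    (hG1' : ∀ j ≤ N, 1 ≤ j → G 1 j = 0)
    (hG : ∀ k j, k + 2 ≤ m → j ≤ N → G (k + 2) j =
      α j * G (k + 1) (j - 1) + β j * G (k + 1) (min (j + 1) N) - X ^ 2 * G k j)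
    (g : ℤ[X]) (hGm : ∀ j ≤ N, G m j = g) :
    alt T m false b = alt T m true b := by
  set E : Bool → ℕ → V := fun r j => Lo r j + Up r j with hE
  have tlo : ∀ r j, j ≤ N → (T r + 1) (Lo r j) = α j • E r j := by
    intro r j hj
    rw [LinearMap.add_apply, hlo r j hj, Module.End.one_apply, hE]; module
  have tup : ∀ r j, j ≤ N → (T r + 1) (Up r j) = β j • E r j := by
    intro r j hj
    rw [LinearMap.add_apply, hup r j hj, Module.End.one_apply, hE]; module
  -- the action on sums
  have act : ∀ (F : ℕ → ℤ[X]) (r : Bool),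
      (T (!r) + 1) (∑ j ∈ Finset.range (N + 1), F j • E r j) =
        ∑ j ∈ Finset.range (N + 1), (α j * F (j - 1) + β j * F (min (j + 1) N)) • E (!r) j := by
    intro F r
    have e1 : (T (!r) + 1) (∑ j ∈ Finset.range (N + 1), F j • Lo r j) =
        ∑ j ∈ Finset.range (N + 1), (β j * F (min (j + 1) N)) • E (!r) j
          - (β N * F N) • E (!r) N + (α 0 * F 0) • E (!r) 0 := by
      rw [map_sum, Finset.sum_range_succ', Finset.sum_range_succ]
      have : min (N + 1) N = N := by omega
      rw [this, add_sub_cancel_right, map_smul, h0, ← h0 (!r), tlo _ _ (Nat.zero_le _), smul_smul,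
        mul_comm (F 0)]
      congr 1
      apply Finset.sum_congr rfl
      intro j hj
      rw [Finset.mem_range] at hj
      have h3 := h1 (!r) j hj
      rw [Bool.not_not] at h3
      rw [map_smul, h3, tup _ _ hj.le, smul_smul, mul_comm, show min (j + 1) N = j + 1 by omega]
    have e2 : (T (!r) + 1) (∑ j ∈ Finset.range (N + 1), F j • Up r j) =
        ∑ j ∈ Finset.range (N + 1), (α j * F (j - 1)) • E (!r) j
          - (α 0 * F 0) • E (!r) 0 + (β N * F N) • E (!r) N := by
      rw [map_sum, Finset.sum_range_succ, Finset.sum_range_succ']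
      rw [Nat.zero_sub, add_sub_cancel_right, map_smul, ← h2 r, tup _ _ le_rfl, smul_smul,
        mul_comm (F N)]
      congr 1
      apply Finset.sum_congr rfl
      intro j hj
      rw [Finset.mem_range] at hj
      rw [map_smul, ← h1 r j hj, tlo _ _ (by omega), smul_smul, mul_comm, Nat.add_sub_cancel]
    have e3 : ∑ j ∈ Finset.range (N + 1), F j • E r j =
        ∑ j ∈ Finset.range (N + 1), F j • Lo r j + ∑ j ∈ Finset.range (N + 1), F j • Up r j := by
      rw [← Finset.sum_add_distrib]
      exact Finset.sum_congr rfl (fun j _ => smul_add _ _ _)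
    simp only [add_smul]
    rw [e3, map_add, e1, e2, Finset.sum_add_distrib]
    abel
  have orb : ∀ r, ∑ j ∈ Finset.range (N + 1), E (!r) j = ∑ j ∈ Finset.range (N + 1), E r j := by
    intro r
    simp only [hE, Finset.sum_add_distrib]
    rw [Finset.sum_range_succ' (fun j => Lo (!r) j), Finset.sum_range_succ (fun j => Up (!r) j),
      Finset.sum_range_succ' (fun j => Lo r j), Finset.sum_range_succ (fun j => Up r j), h0, h0, h2,
      Finset.sum_congr rfl (fun j hj => h1 r j (Finset.mem_range.mp hj))]
    have : ∀ j ∈ Finset.range N, Lo r (j + 1) = Up (!r) j := by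
      intro j hj
      have := h1 (!r) j (Finset.mem_range.mp hj)
      rwa [Bool.not_not] at this
    rw [Finset.sum_congr rfl this]
    abel
  have formula : ∀ k, k + 1 ≤ m → ∀ e,
      KK T (k + 1) e b = ∑ j ∈ Finset.range (N + 1), G (k + 1) j • E (lt k e) j := by
    intro k
    induction k using Nat.strong_induction_on with
    | _ k ih =>
      intro hk e
      match k, ih, hk with
      | 0, ih, hk =>
        rw [KK_one, Finset.sum_range_succ', zero_add, hG1, lt_zero, ← h0 e, tlo _ _ (Nat.zero_le _),
          Finset.sum_eq_zero, zero_add]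
        intro j hj
        rw [Finset.mem_range] at hj
        rw [hG1' _ (by omega) (by omega), zero_smul]
      | k + 1, ih, hk =>
        have hprev : KK T k e b = ∑ j ∈ Finset.range (N + 1), G k j • E (lt (k + 1) e) j := by
          cases k with
          | zero =>
            rw [KK_zero, Finset.sum_eq_zero]; · rfl
            intro j hj
            rw [Finset.mem_range] at hj
            rw [hG0 _ (by omega), zero_smul]
          | succ k =>
            rw [ih k (by omega) (by omega) e, lt_succ (k + 1), lt_succ, Bool.not_not]
        rw [KK_rec T hq, LinearMap.sub_apply, LinearMap.smul_apply, Module.End.mul_apply, hprev,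
          ih k (by omega) (by omega) e, lt_succ, act, Finset.smul_sum, ← Finset.sum_sub_distrib]
        apply Finset.sum_congr rfl
        intro j hj
        rw [Finset.mem_range] at hj
        rw [hG k j hk (by omega), smul_smul, ← sub_smul]
  obtain ⟨k, rfl⟩ : ∃ k, m = k + 1 := ⟨m - 1, by omega⟩
  have hfin : ∀ e, KK T (k + 1) e b = g • ∑ j ∈ Finset.range (N + 1), E false j := by
    intro e
    rw [formula k le_rfl e, Finset.sum_congr rfl (fun j hj => by
      rw [hGm j (by rw [Finset.mem_range] at hj; omega)]), ← Finset.smul_sum]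
    congr 1
    cases lt k e
    · rfl
    · exact orb false
  have := (hfin false).trans (hfin true).symm
  simpa [KK] using this
end ladder
end LV

open Polynomial
open scoped Classical

namespace LV
section base
variable {B W : Type} [Group W] {M : CoxeterMatrix B} {cs : CoxeterSystem M W} {st : W ≃* W}

/-- a minimal twisted involution for the two letters -/
structure Base (cs : CoxeterSystem M W) (st : W ≃* W) (i : Bool → B) (b : W) : Prop where
  H : HS cs st
  ne : ss cs i false ≠ ss cs i true
  mne : mm cs i ≠ 0
  inv : st b = b⁻¹
  up : ∀ e, cs.length b < cs.length (ss cs i e * b)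

variable {i : Bool → B} {b : W}

theorem Base.two_le (h : Base cs st i b) : 2 ≤ mm cs i := by
  have h1 := h.mne
  by_contra h2
  have h3 : mm cs i = 1 := by omega
  have h4 := mm_pow cs i
  rw [h3, pow_one] at h4
  apply h.ne
  rw [← mul_inv_eq_one, s_inv _ (ss_sq cs i)]
  exact h4

theorem Base.ne' (h : Base cs st i b) {e d : Bool} (hh : ss cs i e = ss cs i d) : e = d := by
  have := h.ne
  cases e <;> cases d
  · rfl
  · exact absurd hh this
  · exact absurd hh.symm this
  · rfl

theorem Base.rel_symm (h : Base cs st i b) {q r : Bool}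
    (hh : ss cs i q * b = b * st (ss cs i r)) : ss cs i r * b = b * st (ss cs i q) := by
  have h1 := congrArg (fun x => (st x)⁻¹) hh
  simp only [map_mul, h.inv, h.H.inv, mul_inv_rev, inv_inv] at h1
  rw [h.H.ss_inv, cs.inv_simple] at h1
  exact h1.symm

theorem Base.lemE (h : Base cs st i b) (d : Bool) (L : List Bool)
    (hh : ss cs i d * b = b * st (pw cs i L)) : ∃ r, pw cs i L = ss cs i r := by
  have h1 := h.H.length_right h.inv (pw cs i L)
  rw [← hh, ← pw_reverse] at h1
  have h2 := cs.length_simple_mul b (i d)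
  have h3 := h.up d
  obtain ⟨e, he⟩ := length_pw_one cs i b h.up L.reverse (by
    rw [← h1]; change cs.length (cs.simple (i d) * b) = _
    change _ < cs.length (cs.simple (i d) * b) at h3
    omega)
  rw [pw_reverse, inv_eq_iff_eq_inv, s_inv _ (ss_sq cs i)] at he
  exact ⟨e, he⟩

/-- the left half-twist -/
def xx (cs : CoxeterSystem M W) (st : W ≃* W) (i : Bool → B) (b : W) (k : ℕ) (e : Bool) : W :=
  b * (st (alt (ss cs i) k e))⁻¹

theorem xx_succ (H : HS cs st) (k : ℕ) (e : Bool) :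
    xx cs st i b (k + 1) e = xx cs st i b k e * st (ss cs i (lt k e)) := by
  rw [xx, xx, alt_succ, map_mul, mul_inv_rev, H.ss_inv, mul_assoc]

theorem Base.length_xx (h : Base cs st i b) (k : ℕ) (e : Bool) (hk : k ≤ mm cs i) :
    cs.length (xx cs st i b k e) = k + cs.length b := by
  rw [xx, ← map_inv, h.H.length_right h.inv, inv_inv, length_alt cs i b h.up k e (Or.inl hk)]

theorem Base.coinc (h : Base cs st i b) (k : ℕ) (e d : Bool) (hk : k < mm cs i)
    (hh : ss cs i d * xx cs st i b k e = xx cs st i b k e * st (ss cs i (lt k e))) :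
    (ss cs i d * b = b * st (ss cs i e)) ∨
      (k + 1 = mm cs i ∧ ss cs i d * b = b * st (ss cs i (!e))) := by
  have h1 : ss cs i d * b = b * st (pw cs i ((altL k e).reverse ++ [lt k e] ++ altL k e)) := by
    rw [pw_append, pw_append, pw_reverse, pw_altL, pw_cons, pw_nil, mul_one]
    rw [xx, ← mul_assoc, mul_inv_eq_iff_eq_mul] at hh
    rw [hh, map_mul, map_mul, map_inv]
    simp only [mul_assoc]
  obtain ⟨r, hr⟩ := h.lemE d _ h1
  rw [hr] at h1
  rw [pw_append, pw_append, pw_reverse, pw_altL, pw_cons, pw_nil, mul_one, mul_assoc,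
    inv_mul_eq_iff_eq_mul] at hr
  change ss cs i (lt k e) * _ = _ at hr
  rw [← alt_succ] at hr
  by_cases hre : r = e
  · rw [hre] at h1
    exact Or.inl h1
  · have hre' : r = !e := by revert hre; cases r <;> cases e <;> simp
    subst hre'
    have h2 : alt (ss cs i) k e * ss cs i (!e) = alt (ss cs i) (k + 1) (!e) := by
      rw [alt_succ', Bool.not_not]
    rw [h2, ← mul_inv_eq_one, alt_inv _ (ss_sq cs i), lt_not, Bool.not_not] at hr
    have h3 := alt_add (ss cs i) (k + 1) (k + 1) (lt (k + 1) e)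
    rw [lt_lt, hr] at h3
    have := mm_le cs i _ (by omega) _ h3
    exact Or.inr ⟨by omega, h1⟩

theorem Base.nodesc (h : Base cs st i b) (e : Bool) (n : ℕ) (hn : n ≤ mm cs i)
    (h0 : ∀ d, ss cs i d * b ≠ b * st (ss cs i e))
    (h1 : n = mm cs i → ∀ d, ss cs i d * b ≠ b * st (ss cs i (!e))) (k : ℕ) (hk : k ≤ n) :
    ∀ d, cs.length (xx cs st i b k e) < cs.length (ss cs i d * xx cs st i b k e) := by
  induction k with
  | zero => intro d; simpa [xx] using h.up d
  | succ k ih =>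
    intro d
    have ihd := ih (by omega) d
    by_contra hc
    obtain ⟨j, hj⟩ := h.H.S (i (lt k e))
    have h2 := cs.length_simple_mul (xx cs st i b (k + 1) e) (i d)
    have h3 : cs.length (ss cs i d * xx cs st i b (k + 1) e) < cs.length (xx cs st i b (k + 1) e) := by
      change ¬ _ < cs.length (cs.simple (i d) * _) at hc
      change cs.length (cs.simple (i d) * _) < _
      omega
    rw [xx_succ h.H] at h3
    change cs.length (_ * (_ * st (cs.simple (i (lt k e))))) <
      cs.length (_ * st (cs.simple (i (lt k e)))) at h3
    rw [hj] at h3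
    have h4 := lemQ cs _ _ _ ihd h3
    rw [← hj] at h4
    rcases h.coinc k e d (by omega) h4 with h5 | ⟨h5, h6⟩
    · exact h0 d h5
    · exact h1 (by omega) d h6

/-- twisted conjugates -/
def zz (cs : CoxeterSystem M W) (st : W ≃* W) (i : Bool → B) (b : W) (k : ℕ) (e : Bool) : W :=
  alt (ss cs i) k e * b * (st (alt (ss cs i) k e))⁻¹

theorem zz_succ (H : HS cs st) (k : ℕ) (e : Bool) : zz cs st i b (k + 1) e =
    cs.simple (i (lt k e)) * zz cs st i b k e * st (cs.simple (i (lt k e))) := by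
  rw [zz, zz, alt_succ, map_mul, mul_inv_rev, H.ss_inv]
  simp only [mul_assoc]

theorem zz_inv (H : HS cs st) (hb : st b = b⁻¹) (k : ℕ) (e : Bool) :
    st (zz cs st i b k e) = (zz cs st i b k e)⁻¹ := H.tw_inv hb _

theorem zz_act (H : HS cs st) (hb : st b = b⁻¹) (n : ℕ) (e : Bool)
    (hl : ∀ k ≤ n, cs.length (zz cs st i b k e) = 2 * k + cs.length b) (k : ℕ) (hk : k ≤ n) :
    alt (fun d => TT cs st (i d)) k e (ba b) = ba (zz cs st i b k e) := by
  induction k with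
  | zero => simp [zz]
  | succ k ih =>
    rw [alt_succ, Module.End.mul_apply, ih (by omega)]
    have h1 := hl k (by omega)
    have h2 := hl (k + 1) hk
    rw [zz_succ H] at h2 ⊢
    have h3 := H.edge_cplx' (zz_inv (i := i) H hb k e) (i := i (lt k e)) (by omega)
    rw [h3.lo, sub_self, zero_smul, zero_add, one_smul]

theorem Base.caseA (h : Base cs st i b)
    (h0 : ∀ d e, ss cs i d * b ≠ b * st (ss cs i e)) :
    alt (fun d => TT cs st (i d)) (mm cs i) false (ba b) =
      alt (fun d => TT cs st (i d)) (mm cs i) true (ba b) := by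
  have key : ∀ e, alt (fun d => TT cs st (i d)) (mm cs i) e (ba b) =
      ba (zz cs st i b (mm cs i) e) := by
    intro e
    refine zz_act h.H h.inv (mm cs i) e (fun k hk => ?_) _ le_rfl
    have h1 := length_alt cs i _ (h.nodesc e (mm cs i) le_rfl (fun d => h0 d e)
      (fun _ d => h0 d _) k hk) k e (Or.inl hk)
    rw [h.length_xx k e hk] at h1
    rw [zz, mul_assoc]
    change cs.length (_ * xx cs st i b k e) = _
    omega
  rw [key, key, zz, zz, alt_braid _ (ss_sq cs i) _ (mm_pow cs i) true]
  rfl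

theorem Base.caseB (h : Base cs st i b) (q : Bool) (hq : ss cs i q * b = b * st (ss cs i q))
    (h0 : ∀ d, ss cs i d * b ≠ b * st (ss cs i (!q))) :
    alt (fun d => TT cs st (i d)) (mm cs i) q (ba b) =
      alt (fun d => TT cs st (i d)) (mm cs i) (!q) (ba b) := by
  obtain ⟨n, hn⟩ : ∃ n, mm cs i = n + 1 := ⟨mm cs i - 1, by have := h.mne; omega⟩
  have hnd := h.nodesc (!q) n (by omega) h0 (fun h' => by omega)
  have hup := h.up q
  have hup1 := cs.length_simple_mul b (i q)
  change _ < cs.length (cs.simple (i q) * b) at hup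
  have hinv' := h.H.real_inv h.inv hq
  have hA : ∀ k ≤ n, cs.length (zz cs st i b k (!q)) = 2 * k + cs.length b := by
    intro k hk
    have h1 := length_alt cs i _ (hnd k hk) k (!q) (Or.inl (by omega))
    rw [h.length_xx k _ (by omega)] at h1
    rw [zz, mul_assoc]
    change cs.length (_ * xx cs st i b k (!q)) = _
    omega
  have hB : ∀ k ≤ n, cs.length (zz cs st i (cs.simple (i q) * b) k (!q)) =
      2 * k + cs.length (cs.simple (i q) * b) := by
    intro k hk
    have h1 := length_alt cs i _ (hnd k hk) (k + 1) q (Or.inl (by omega))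
    rw [h.length_xx k _ (by omega), alt_succ', xx] at h1
    rw [zz]
    simp only [mul_assoc] at h1 ⊢
    change cs.length (alt (ss cs i) k (!q) * (cs.simple (i q) * _)) = _ at h1
    omega
  have hR := h.H.edge_real h.inv hq hup
  have hsw : ss cs i (lt n (!q)) * alt (ss cs i) n (!q) = alt (ss cs i) n (!q) * ss cs i q := by
    have := alt_braid _ (ss_sq cs i) _ (mm_pow cs i) q
    rw [hn, alt_succ', alt_succ] at this
    exact this.symm
  have hz : cs.simple (i (lt n (!q))) * zz cs st i b n (!q) =
      zz cs st i (cs.simple (i q) * b) n (!q) := by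
    rw [zz, zz, ← mul_assoc, ← mul_assoc]
    change ss cs i (lt n (!q)) * _ * _ * _ = _
    rw [hsw]; simp only [mul_assoc]
  have hz2 : cs.simple (i (lt n (!q))) * zz cs st i b n (!q) =
      zz cs st i b n (!q) * st (cs.simple (i (lt n (!q)))) := by
    rw [hz, zz, zz]
    change alt (ss cs i) n (!q) * (ss cs i q * b) * _ = _ * st (ss cs i (lt n (!q)))
    have h5 : (st (alt (ss cs i) n (!q)))⁻¹ * st (ss cs i (lt n (!q))) =
        st (ss cs i q) * (st (alt (ss cs i) n (!q)))⁻¹ := by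
      rw [inv_mul_eq_iff_eq_mul, ← mul_assoc, ← map_mul, ← hsw, map_mul, mul_inv_cancel_right]
    rw [hq, mul_assoc _ _ (st (ss cs i (lt n (!q)))), h5]
    simp only [mul_assoc]
  have hE := h.H.edge_real (zz_inv h.H h.inv n (!q)) hz2 (by
    rw [hz, hA n le_rfl, hB n le_rfl]; omega)
  rw [hn, alt_succ' _ n q, alt_succ _ n (!q), Module.End.mul_apply, Module.End.mul_apply,
    zz_act h.H h.inv n (!q) hA n le_rfl, hE.lo, hR.lo, map_add, map_smul, map_smul,
    zz_act h.H h.inv n (!q) hA n le_rfl, zz_act h.H hinv' n (!q) hB n le_rfl, hz]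
end base
end LV

open Polynomial
open scoped Classical

namespace LV
section polys

/-- quantum integers -/
noncomputable def br (a : ℕ) : ℤ[X] := ∑ i ∈ Finset.range a, X ^ i

theorem br_zero : br 0 = 0 := by simp [br]
theorem br_succ (a : ℕ) : br (a + 1) = br a + X ^ a := by simp [br, Finset.sum_range_succ]
theorem br_one : br 1 = 1 := by rw [br_succ, br_zero]; simp

noncomputable def FC (m k J : ℕ) : ℤ[X] := if k + J ≤ m then br (k - J) else br (2 * k - m)

theorem FC_le {m k J : ℕ} (a : ℕ) (h : k + J ≤ m) (ha : k - J = a) : FC m k J = br a := by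
  rw [FC, if_pos h, ha]
theorem FC_gt {m k J : ℕ} (a : ℕ) (h : m < k + J) (ha : 2 * k - m = a) : FC m k J = br a := by
  rw [FC, if_neg (by omega), ha]

theorem FC_zero_rec (m k : ℕ) (hk : k + 2 ≤ m) :
    FC m (k + 2) 0 = (X + 1) * FC m (k + 1) 0 + (X ^ 2 - X) * FC m (k + 1) 1 - X ^ 2 * FC m k 0 := by
  rw [FC_le (k + 2) (by omega) rfl, FC_le (k + 1) (by omega) rfl, FC_le k (by omega) rfl,
    FC_le k (by omega) rfl, br_succ, br_succ]
  ring

theorem FC_mid_rec (m k J : ℕ) (hk : k + 2 ≤ m) (hJ : 1 ≤ J) (hJm : 2 * J + 2 ≤ m) :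
    FC m (k + 2) J = FC m (k + 1) (J - 1) + X ^ 2 * FC m (k + 1) (J + 1) - X ^ 2 * FC m k J := by
  have h4 : k + J + 2 ≤ m ∨ k + J + 1 = m ∨ k + J = m ∨ m < k + J := by omega
  rcases h4 with h | h | h | h
  · rw [FC_le (k + 2 - J) (by omega) rfl, FC_le (k + 2 - J) (by omega) (by omega),
      FC_le (k - J) (by omega) (by omega), FC_le (k - J) (by omega) rfl]
    ring
  · obtain ⟨a, ha⟩ : ∃ a, k = J + a := ⟨k - J, by omega⟩
    rw [FC_gt (a + 3) (by omega) (by omega), FC_le (a + 2) (by omega) (by omega),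
      FC_gt (a + 1) (by omega) (by omega), FC_le a (by omega) (by omega)]
    simp only [br_succ]; ring
  · obtain ⟨a, ha⟩ : ∃ a, k = J + a := ⟨k - J, by omega⟩
    rw [FC_gt (a + 4) (by omega) (by omega), FC_le (a + 2) (by omega) (by omega),
      FC_gt (a + 2) (by omega) (by omega), FC_le a (by omega) (by omega)]
    simp only [br_succ]; ring
  · obtain ⟨a, ha⟩ : ∃ a, 2 * k = m + a := ⟨2 * k - m, by omega⟩
    rw [FC_gt (a + 4) (by omega) (by omega), FC_gt (a + 2) (by omega) (by omega),
      FC_gt (a + 2) (by omega) (by omega), FC_gt a (by omega) (by omega)]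
    simp only [br_succ]; ring

theorem FC_odd_rec (m k J : ℕ) (hk : k + 2 ≤ m) (hJ : 1 ≤ J) (hJm : 2 * J + 1 = m) :
    FC m (k + 2) J = FC m (k + 1) (J - 1) + X ^ 2 * FC m (k + 1) J - X ^ 2 * FC m k J := by
  have h4 : k + J + 2 ≤ m ∨ k + J + 1 = m ∨ k + J = m ∨ m < k + J := by omega
  rcases h4 with h | h | h | h
  · rw [FC_le (k + 2 - J) (by omega) rfl, FC_le (k + 2 - J) (by omega) (by omega),
      FC_le 0 (by omega) (by omega), FC_le 0 (by omega) (by omega)]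
    ring
  · rw [FC_gt 3 (by omega) (by omega), FC_le 2 (by omega) (by omega),
      FC_le 1 (by omega) (by omega), FC_le 0 (by omega) (by omega)]
    simp only [br_succ, br_zero]; ring
  · rw [FC_gt 5 (by omega) (by omega), FC_le 3 (by omega) (by omega),
      FC_gt 3 (by omega) (by omega), FC_le 1 (by omega) (by omega)]
    simp only [br_succ, br_zero]; ring
  · obtain ⟨a, ha⟩ : ∃ a, 2 * k = m + a := ⟨2 * k - m, by omega⟩
    rw [FC_gt (a + 4) (by omega) (by omega), FC_gt (a + 2) (by omega) (by omega),
      FC_gt (a + 2) (by omega) (by omega), FC_gt a (by omega) (by omega)]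
    simp only [br_succ]; ring

theorem FC_even_rec (m k J : ℕ) (hk : k + 2 ≤ m) (hJ : 1 ≤ J) (hJm : 2 * J = m) :
    FC m (k + 2) J = (X + 1) * FC m (k + 1) (J - 1) + (X ^ 2 - X) * FC m (k + 1) J
      - X ^ 2 * FC m k J := by
  have h4 : k + J + 2 ≤ m ∨ k + J + 1 = m ∨ k + J = m ∨ m < k + J := by omega
  rcases h4 with h | h | h | h
  · rw [FC_le 0 (by omega) (by omega), FC_le 0 (by omega) (by omega),
      FC_le 0 (by omega) (by omega), FC_le 0 (by omega) (by omega), br_zero]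
    ring
  · rw [FC_gt 2 (by omega) (by omega), FC_le 1 (by omega) (by omega),
      FC_le 0 (by omega) (by omega), FC_le 0 (by omega) (by omega)]
    simp only [br_succ, br_zero]; ring
  · rw [FC_gt 4 (by omega) (by omega), FC_le 2 (by omega) (by omega),
      FC_gt 2 (by omega) (by omega), FC_le 0 (by omega) (by omega)]
    simp only [br_succ, br_zero]; ring
  · obtain ⟨a, ha⟩ : ∃ a, 2 * k = m + a := ⟨2 * k - m, by omega⟩
    rw [FC_gt (a + 4) (by omega) (by omega), FC_gt (a + 2) (by omega) (by omega),
      FC_gt (a + 2) (by omega) (by omega), FC_gt a (by omega) (by omega)]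
    simp only [br_succ]; ring

noncomputable def FD (m k J : ℕ) : ℤ[X] :=
  if k ≤ J then 0 else if k + J < m then 1 else 1 + X ^ (2 * k - m)

theorem FD_zero {m k J : ℕ} (h : k ≤ J) : FD m k J = 0 := by rw [FD, if_pos h]
theorem FD_one {m k J : ℕ} (h : J < k) (h' : k + J < m) : FD m k J = 1 := by
  rw [FD, if_neg (by omega), if_pos h']
theorem FD_gt {m k J : ℕ} (a : ℕ) (h : J < k) (h' : m ≤ k + J) (ha : 2 * k - m = a) :
    FD m k J = 1 + X ^ a := by
  rw [FD, if_neg (by omega), if_neg (by omega), ha]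

/-- complex step, not at the top -/
theorem FD_mid_rec (m k J : ℕ) (hk : k + 2 ≤ m) (hJm : 2 * J + 3 ≤ m) :
    FD m (k + 2) J = FD m (k + 1) (J - 1) + X ^ 2 * FD m (k + 1) (J + 1) - X ^ 2 * FD m k J := by
  rcases Nat.eq_zero_or_pos J with rfl | hJ
  · have e1 : FD m (k + 1) (0 - 1) = 1 := FD_one (by omega) (by omega)
    rcases Nat.eq_zero_or_pos k with rfl | h0
    · rw [e1, FD_one (by omega) (by omega), FD_zero (by omega), FD_zero (by omega)]; ring
    · rcases Nat.lt_or_ge (k + 2) m with h1 | h1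
      · rw [e1, FD_one (by omega) (by omega), FD_one (by omega) (by omega),
          FD_one (by omega) (by omega)]
        ring
      · rw [e1, FD_gt (k + 2) (by omega) (by omega) (by omega),
          FD_gt k (by omega) (by omega) (by omega), FD_one (by omega) (by omega)]
        ring
  have h4 : k + 1 < J ∨ k + 1 = J ∨ k = J ∨ (J < k ∧ (k + J + 2 < m ∨ k + J + 2 = m ∨
    k + J + 1 = m ∨ m ≤ k + J)) := by omega
  rcases h4 with h | h | h | ⟨h5, h | h | h | h⟩
  · rw [FD_zero (by omega), FD_zero (by omega), FD_zero (by omega), FD_zero (by omega)]; ring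
  · rw [FD_one (by omega) (by omega), FD_one (by omega) (by omega), FD_zero (by omega),
      FD_zero (by omega)]
    ring
  · rw [FD_one (by omega) (by omega), FD_one (by omega) (by omega), FD_zero (by omega),
      FD_zero (by omega)]
    ring
  · rw [FD_one (by omega) (by omega), FD_one (by omega) (by omega), FD_one (by omega) (by omega),
      FD_one (by omega) (by omega)]
    ring
  · obtain ⟨a, ha⟩ : ∃ a, 2 * k + 2 = m + a := ⟨2 * k + 2 - m, by omega⟩
    rw [FD_gt (a + 2) (by omega) (by omega) (by omega), FD_one (by omega) (by omega),
      FD_gt a (by omega) (by omega) (by omega), FD_one (by omega) (by omega)]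
    ring
  · obtain ⟨a, ha⟩ : ∃ a, 2 * k + 2 = m + a := ⟨2 * k + 2 - m, by omega⟩
    rw [FD_gt (a + 2) (by omega) (by omega) (by omega), FD_one (by omega) (by omega),
      FD_gt a (by omega) (by omega) (by omega), FD_one (by omega) (by omega)]
    ring
  · obtain ⟨a, ha⟩ : ∃ a, 2 * k = m + a := ⟨2 * k - m, by omega⟩
    rw [FD_gt (a + 4) (by omega) (by omega) (by omega),
      FD_gt (a + 2) (by omega) (by omega) (by omega),
      FD_gt (a + 2) (by omega) (by omega) (by omega), FD_gt a (by omega) (by omega) (by omega)]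
    ring

/-- complex step at the top, `m` even -/
theorem FD_even_rec (m k J : ℕ) (hk : k + 2 ≤ m) (hJm : 2 * J + 2 = m) :
    FD m (k + 2) J = FD m (k + 1) (J - 1) + X ^ 2 * FD m (k + 1) J - X ^ 2 * FD m k J := by
  rcases Nat.eq_zero_or_pos J with rfl | hJ
  · rw [FD_gt 2 (by omega) (by omega) (by omega), FD_one (by omega) (by omega),
      FD_zero (by omega)]
    ring
  have h4 : k + 1 < J ∨ k + 1 = J ∨ k = J ∨ k = J + 1 ∨ J + 2 ≤ k := by omega
  rcases h4 with h | h | h | h | h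
  · rw [FD_zero (by omega), FD_zero (by omega), FD_zero (by omega), FD_zero (by omega)]; ring
  · rw [FD_one (by omega) (by omega), FD_one (by omega) (by omega), FD_zero (by omega),
      FD_zero (by omega)]
    ring
  · rw [FD_gt 2 (by omega) (by omega) (by omega), FD_one (by omega) (by omega),
      FD_one (by omega) (by omega), FD_zero (by omega)]
    ring
  · rw [FD_gt 4 (by omega) (by omega) (by omega), FD_one (by omega) (by omega),
      FD_gt 2 (by omega) (by omega) (by omega), FD_one (by omega) (by omega)]
    ring
  · obtain ⟨a, ha⟩ : ∃ a, 2 * k = m + a := ⟨2 * k - m, by omega⟩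
    rw [FD_gt (a + 4) (by omega) (by omega) (by omega),
      FD_gt (a + 2) (by omega) (by omega) (by omega),
      FD_gt (a + 2) (by omega) (by omega) (by omega), FD_gt a (by omega) (by omega) (by omega)]
    ring

/-- real step at the top, `m` odd -/
theorem FD_odd_rec (m k J : ℕ) (hk : k + 2 ≤ m) (hJ : 1 ≤ J) (hJm : 2 * J + 1 = m) :
    FD m (k + 2) J = (X + 1) * FD m (k + 1) (J - 1) + (X ^ 2 - X) * FD m (k + 1) J
      - X ^ 2 * FD m k J := by
  have h4 : k + 1 < J ∨ k + 1 = J ∨ k = J ∨ J + 1 ≤ k := by omega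
  rcases h4 with h | h | h | h
  · rw [FD_zero (by omega), FD_zero (by omega), FD_zero (by omega), FD_zero (by omega)]; ring
  · rw [FD_gt 1 (by omega) (by omega) (by omega), FD_one (by omega) (by omega),
      FD_zero (by omega), FD_zero (by omega)]
    ring
  · rw [FD_gt 3 (by omega) (by omega) (by omega), FD_one (by omega) (by omega),
      FD_gt 1 (by omega) (by omega) (by omega), FD_zero (by omega)]
    ring
  · obtain ⟨a, ha⟩ : ∃ a, 2 * k = m + a := ⟨2 * k - m, by omega⟩
    rw [FD_gt (a + 4) (by omega) (by omega) (by omega),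
      FD_gt (a + 2) (by omega) (by omega) (by omega),
      FD_gt (a + 2) (by omega) (by omega) (by omega), FD_gt a (by omega) (by omega) (by omega)]
    ring
end polys
end LV

open Polynomial
open scoped Classical

namespace LV
section CD
variable {B W : Type} [Group W] {M : CoxeterMatrix B} {cs : CoxeterSystem M W} {st : W ≃* W}
  {i : Bool → B} {b : W}

theorem lt_odd (a : ℕ) (e : Bool) : lt (2 * a + 1) e = !e := by rw [lt_succ, lt_two_mul]

theorem Base.len (h : Base cs st i b) (k : ℕ) (e : Bool) (hk : k ≤ mm cs i) :
    cs.length (alt (ss cs i) k e * b) = k + cs.length b :=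
  length_alt cs i b h.up k e (Or.inl hk)

theorem Base.braid (_h : Base cs st i b) (e : Bool) :
    alt (ss cs i) (mm cs i) e = alt (ss cs i) (mm cs i) (!e) :=
  alt_braid _ (ss_sq cs i) _ (mm_pow cs i) e

theorem Base.altC (_h : Base cs st i b) (hC : ∀ e, ss cs i e * b = b * st (ss cs i e))
    (k : ℕ) (e : Bool) : alt (ss cs i) k e * b = b * st (alt (ss cs i) k e) := by
  induction k with
  | zero => simp
  | succ k ih => rw [alt_succ, mul_assoc, ih, ← mul_assoc, hC, map_mul, mul_assoc]

theorem Base.invC (h : Base cs st i b) (hC : ∀ e, ss cs i e * b = b * st (ss cs i e))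
    (a : ℕ) (e : Bool) : st (alt (ss cs i) (2 * a + 1) e * b) =
      (alt (ss cs i) (2 * a + 1) e * b)⁻¹ := by
  have h1 : (alt (ss cs i) (2 * a + 1) e)⁻¹ = alt (ss cs i) (2 * a + 1) e := by
    rw [alt_inv _ (ss_sq cs i), lt_odd, Bool.not_not]
  conv_rhs => rw [h.altC hC, mul_inv_rev, ← map_inv, h1]
  rw [map_mul, h.inv]

theorem Base.altD (_h : Base cs st i b) (hD : ∀ e, ss cs i e * b = b * st (ss cs i (!e)))
    (k : ℕ) (e : Bool) : alt (ss cs i) k e * b = b * st (alt (ss cs i) k (!e)) := by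
  induction k with
  | zero => simp
  | succ k ih => rw [alt_succ, mul_assoc, ih, ← mul_assoc, hD, alt_succ, map_mul, mul_assoc, lt_not]

theorem Base.invD (h : Base cs st i b) (hD : ∀ e, ss cs i e * b = b * st (ss cs i (!e)))
    (a : ℕ) (e : Bool) : st (alt (ss cs i) (2 * a) e * b) =
      (alt (ss cs i) (2 * a) e * b)⁻¹ := by
  have h1 : (alt (ss cs i) (2 * a) (!e))⁻¹ = alt (ss cs i) (2 * a) e := by
    rw [alt_inv _ (ss_sq cs i), lt_two_mul, Bool.not_not]
  conv_rhs => rw [h.altD hD, mul_inv_rev, ← map_inv, h1]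
  rw [map_mul, h.inv]

theorem Base.edgeC (h : Base cs st i b) (hC : ∀ e, ss cs i e * b = b * st (ss cs i e))
    (r : Bool) (J : ℕ) (hJ : 2 * J ≤ mm cs i) :
    Edge cs st (i r) (alt (ss cs i) (2 * J - 1) (!r) * b)
      (alt (ss cs i) (min (2 * J + 1) (mm cs i)) r * b)
      (if J = 0 ∨ 2 * J = mm cs i then X + 1 else 1)
      (if J = 0 ∨ 2 * J = mm cs i then X ^ 2 - X else X ^ 2) := by
  have hm := h.two_le
  rcases J with _ | J
  · rw [if_pos (Or.inl rfl), if_pos (Or.inl rfl)]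
    have e1 : min (2 * 0 + 1) (mm cs i) = 1 := by omega
    have e2 : 2 * 0 - 1 = 0 := rfl
    rw [e1, e2, alt_one, alt_zero, one_mul]
    exact h.H.edge_real h.inv (hC r) (h.up r)
  · have e2 : 2 * (J + 1) - 1 = 2 * J + 1 := by omega
    rw [e2]
    have e3 : ss cs i r * (alt (ss cs i) (2 * J + 1) (!r) * b) =
        alt (ss cs i) (2 * J + 1 + 1) (!r) * b := by
      rw [alt_succ _ (2 * J + 1), lt_odd, Bool.not_not, mul_assoc]
    by_cases hJm : 2 * (J + 1) = mm cs i
    · rw [if_pos (Or.inr hJm), if_pos (Or.inr hJm)]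
      have e1 : min (2 * (J + 1) + 1) (mm cs i) = mm cs i := by omega
      have e4 : ss cs i r * (alt (ss cs i) (2 * J + 1) (!r) * b) =
          alt (ss cs i) (mm cs i) r * b := by
        rw [e3, h.braid r, ← hJm]; rfl
      have h1 := h.H.edge_real (h.invC hC J (!r)) (i := i r) (by
        change ss cs i r * _ = _ * st (ss cs i r)
        rw [mul_assoc, ← hC, e4, ← hJm, show 2 * (J + 1) = 2 * J + 1 + 1 by ring, alt_succ',
          mul_assoc]) (by
        change _ < cs.length (ss cs i r * _)
        rw [e4, h.len _ _ le_rfl, h.len _ _ (by omega)]; omega)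
      change Edge cs st (i r) _ (ss cs i r * _) _ _ at h1
      rw [e4] at h1
      rw [e1]
      exact h1
    · have hno : ¬ (J + 1 = 0 ∨ 2 * (J + 1) = mm cs i) := by omega
      rw [if_neg hno, if_neg hno]
      have e1 : min (2 * (J + 1) + 1) (mm cs i) = 2 * J + 1 + 1 + 1 := by omega
      have e4 : ss cs i r * (alt (ss cs i) (2 * J + 1) (!r) * b) * st (ss cs i r) =
          alt (ss cs i) (2 * J + 1 + 1 + 1) r * b := by
        rw [e3, mul_assoc, ← hC, alt_succ' _ (2 * J + 1 + 1) r, mul_assoc]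
      have h1 := h.H.edge_cplx' (h.invC hC J (!r)) (i := i r) (by
        change _ ≤ cs.length (ss cs i r * _ * st (ss cs i r))
        rw [e4, h.len _ _ (by omega), h.len _ _ (by omega)]; omega)
      change Edge cs st (i r) _ (ss cs i r * _ * st (ss cs i r)) _ _ at h1
      rw [e4] at h1
      rw [e1]
      exact h1

theorem Base.edgeD (h : Base cs st i b) (hD : ∀ e, ss cs i e * b = b * st (ss cs i (!e)))
    (r : Bool) (J : ℕ) (hJ : 2 * J + 1 ≤ mm cs i) :
    Edge cs st (i r) (alt (ss cs i) (2 * J) r * b)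
      (alt (ss cs i) (min (2 * J + 2) (mm cs i)) (!r) * b)
      (if 2 * J + 1 = mm cs i then X + 1 else 1)
      (if 2 * J + 1 = mm cs i then X ^ 2 - X else X ^ 2) := by
  have e3 : ss cs i r * (alt (ss cs i) (2 * J) r * b) = alt (ss cs i) (2 * J + 1) r * b := by
    rw [alt_succ _ (2 * J), lt_two_mul, mul_assoc]
  have hD' : b * st (ss cs i r) = ss cs i (!r) * b := by rw [hD, Bool.not_not]
  by_cases hJm : 2 * J + 1 = mm cs i
  · rw [if_pos hJm, if_pos hJm]
    have e1 : min (2 * J + 2) (mm cs i) = mm cs i := by omega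
    have e4 : ss cs i r * (alt (ss cs i) (2 * J) r * b) = alt (ss cs i) (mm cs i) (!r) * b := by
      rw [e3, ← h.braid r, ← hJm]
    have h1 := h.H.edge_real (h.invD hD J r) (i := i r) (by
        change ss cs i r * _ = _ * st (ss cs i r)
        rw [mul_assoc, hD', e4, ← hJm, alt_succ', Bool.not_not, mul_assoc]) (by
        change _ < cs.length (ss cs i r * _)
        rw [e4, h.len _ _ le_rfl, h.len _ _ (by omega)]; omega)
    change Edge cs st (i r) _ (ss cs i r * _) _ _ at h1
    rw [e4] at h1
    rw [e1]
    exact h1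
  · rw [if_neg hJm, if_neg hJm]
    have e1 : min (2 * J + 2) (mm cs i) = 2 * J + 1 + 1 := by omega
    have e4 : ss cs i r * (alt (ss cs i) (2 * J) r * b) * st (ss cs i r) =
        alt (ss cs i) (2 * J + 1 + 1) (!r) * b := by
      rw [e3, mul_assoc, hD', alt_succ' _ (2 * J + 1) (!r), Bool.not_not, mul_assoc]
    have h1 := h.H.edge_cplx' (h.invD hD J r) (i := i r) (by
      change _ ≤ cs.length (ss cs i r * _ * st (ss cs i r))
      rw [e4, h.len _ _ (by omega), h.len _ _ (by omega)]; omega)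
    change Edge cs st (i r) _ (ss cs i r * _ * st (ss cs i r)) _ _ at h1
    rw [e4] at h1
    rw [e1]
    exact h1

theorem Base.caseC (h : Base cs st i b) (hC : ∀ e, ss cs i e * b = b * st (ss cs i e)) :
    alt (fun d => TT cs st (i d)) (mm cs i) false (ba b) =
      alt (fun d => TT cs st (i d)) (mm cs i) true (ba b) := by
  have hm := h.two_le
  refine ladder (fun d => TT cs st (i d)) (fun e => h.H.quad (i e)) (mm cs i) (mm cs i / 2)
    (by omega) (fun r J => ba (alt (ss cs i) (2 * J - 1) (!r) * b))
    (fun r J => ba (alt (ss cs i) (min (2 * J + 1) (mm cs i)) r * b))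
    (fun J => if J = 0 ∨ 2 * J = mm cs i then X + 1 else 1)
    (fun J => if J = 0 ∨ 2 * J = mm cs i then X ^ 2 - X else X ^ 2) (ba b)
    (fun r j hj => (h.edgeC hC r j (by omega)).lo) (fun r j hj => (h.edgeC hC r j (by omega)).up)
    ?_ ?_ ?_ (fun k J => (X + 1) * FC (mm cs i) k J) ?_ ?_ ?_ ?_ ((X + 1) * br (mm cs i)) ?_
  · intro r; simp
  · intro r j hj
    simp only [Bool.not_not]
    rw [show 2 * (j + 1) - 1 = 2 * j + 1 by omega,
      show min (2 * j + 1) (mm cs i) = 2 * j + 1 by omega]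
  · intro r
    have : min (2 * (mm cs i / 2) + 1) (mm cs i) = mm cs i := by omega
    simp only [this]
    rw [h.braid r]
  · intro j hj
    rw [FC_le 0 (by omega) (by omega), br_zero, mul_zero]
  · simp only [true_or, if_true]
    rw [FC_le 1 (by omega) (by omega), br_one, mul_one]
  · intro j hj hj'
    rw [FC_le 0 (by omega) (by omega), br_zero, mul_zero]
  · intro k j hk hj
    rcases Nat.eq_zero_or_pos j with rfl | h0
    · rw [if_pos (Or.inl rfl), if_pos (Or.inl rfl), show min (0 + 1) (mm cs i / 2) = 1 by omega,
        show 0 - 1 = 0 from rfl, FC_zero_rec _ _ hk]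
      ring
    · have hc : 2 * j + 2 ≤ mm cs i ∨ 2 * j + 1 = mm cs i ∨ 2 * j = mm cs i := by omega
      rcases hc with hc | hc | hc
      · have hno : ¬ (j = 0 ∨ 2 * j = mm cs i) := by omega
        rw [if_neg hno, if_neg hno, show min (j + 1) (mm cs i / 2) = j + 1 by omega,
          FC_mid_rec _ _ _ hk h0 hc]
        ring
      · have hno : ¬ (j = 0 ∨ 2 * j = mm cs i) := by omega
        rw [if_neg hno, if_neg hno, show min (j + 1) (mm cs i / 2) = j by omega,
          FC_odd_rec _ _ _ hk h0 hc]
        ring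
      · rw [if_pos (Or.inr hc), if_pos (Or.inr hc), show min (j + 1) (mm cs i / 2) = j by omega,
          FC_even_rec _ _ _ hk h0 hc]
        ring
  · intro j hj
    rcases Nat.eq_zero_or_pos j with rfl | h0
    · rw [FC_le (mm cs i) (by omega) (by omega)]
    · rw [FC_gt (mm cs i) (by omega) (by omega)]

theorem Base.caseD (h : Base cs st i b) (hD : ∀ e, ss cs i e * b = b * st (ss cs i (!e))) :
    alt (fun d => TT cs st (i d)) (mm cs i) false (ba b) =
      alt (fun d => TT cs st (i d)) (mm cs i) true (ba b) := by
  have hm := h.two_le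
  refine ladder (fun d => TT cs st (i d)) (fun e => h.H.quad (i e)) (mm cs i) ((mm cs i - 1) / 2)
    (by omega) (fun r J => ba (alt (ss cs i) (2 * J) r * b))
    (fun r J => ba (alt (ss cs i) (min (2 * J + 2) (mm cs i)) (!r) * b))
    (fun J => if 2 * J + 1 = mm cs i then X + 1 else 1)
    (fun J => if 2 * J + 1 = mm cs i then X ^ 2 - X else X ^ 2) (ba b)
    (fun r j hj => (h.edgeD hD r j (by omega)).lo) (fun r j hj => (h.edgeD hD r j (by omega)).up)
    ?_ ?_ ?_ (fun k J => FD (mm cs i) k J) ?_ ?_ ?_ ?_ (1 + X ^ (mm cs i)) ?_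
  · intro r; simp
  · intro r j hj
    rw [show 2 * (j + 1) = 2 * j + 2 by omega,
      show min (2 * j + 2) (mm cs i) = 2 * j + 2 by omega]
  · intro r
    have : min (2 * ((mm cs i - 1) / 2) + 2) (mm cs i) = mm cs i := by omega
    simp only [this]
    rw [h.braid (!r)]
  · intro j hj
    exact FD_zero (by omega)
  · rw [if_neg (by omega), FD_one (by omega) (by omega)]
  · intro j hj hj'
    exact FD_zero (by omega)
  · intro k j hk hj
    have hc : 2 * j + 3 ≤ mm cs i ∨ 2 * j + 2 = mm cs i ∨ 2 * j + 1 = mm cs i := by omega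
    rcases hc with hc | hc | hc
    · have hno : ¬ (2 * j + 1 = mm cs i) := by omega
      rw [if_neg hno, if_neg hno, show min (j + 1) ((mm cs i - 1) / 2) = j + 1 by omega,
        FD_mid_rec _ _ _ hk hc, one_mul]
    · have hno : ¬ (2 * j + 1 = mm cs i) := by omega
      rw [if_neg hno, if_neg hno, show min (j + 1) ((mm cs i - 1) / 2) = j by omega,
        FD_even_rec _ _ _ hk hc, one_mul]
    · rw [if_pos hc, if_pos hc, show min (j + 1) ((mm cs i - 1) / 2) = j by omega,
        FD_odd_rec _ _ _ hk (by omega) hc]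
  · intro j hj
    exact FD_gt _ (by omega) (by omega) (by omega)

theorem Base.all (h : Base cs st i b) :
    alt (fun d => TT cs st (i d)) (mm cs i) false (ba b) =
      alt (fun d => TT cs st (i d)) (mm cs i) true (ba b) := by
  by_cases hft : ss cs i false * b = b * st (ss cs i true)
  · have htf := h.rel_symm hft
    exact h.caseD (fun e => by cases e <;> assumption)
  · have htf : ¬ ss cs i true * b = b * st (ss cs i false) := fun h' => hft (h.rel_symm h')
    by_cases hf : ss cs i false * b = b * st (ss cs i false)
    · by_cases ht : ss cs i true * b = b * st (ss cs i true)
      · exact h.caseC (fun e => by cases e <;> assumption)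
      · exact h.caseB false hf (fun d => by cases d <;> assumption)
    · by_cases ht : ss cs i true * b = b * st (ss cs i true)
      · exact (h.caseB true ht (fun d => by cases d <;> assumption)).symm
      · exact h.caseA (fun d e => by cases d <;> cases e <;> assumption)

theorem HS.braidT (H : HS cs st) (i : Bool → B) (hne : ss cs i false ≠ ss cs i true)
    (hm : mm cs i ≠ 0) :
    alt (fun e => TT cs st (i e)) (mm cs i) false = alt (fun e => TT cs st (i e)) (mm cs i) true :=
  H.reduce i hm (fun _ hb hup => Base.all ⟨H, hne, hm, hb, hup⟩)
end CD
end LV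

namespace LV
section final
variable {B W : Type} [Group W] {M : CoxeterMatrix B} {cs : CoxeterSystem M W} {st : W ≃* W}

theorem exists_desc (y : W) (hy : y ≠ 1) : ∃ i, cs.length (y * cs.simple i) < cs.length y := by
  obtain ⟨i, hi⟩ := cs.exists_rightDescent_of_ne_one hy
  exact ⟨i, hi⟩

theorem XRec.ind (H : HS cs st) {p : {z : W // st z = z⁻¹} → W → Prop}
    (h1 : ∀ z, p z 1)
    (h2 : ∀ (i : B) (y : W), cs.length (y * cs.simple i) < cs.length y →
      (∀ z, p z (y * cs.simple i)) → ∀ z, p z y) : ∀ y z, p z y := by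
  intro y
  induction hn : cs.length y using Nat.strong_induction_on generalizing y with
  | _ n ih =>
    by_cases hy : y = 1
    · subst hy; exact h1
    · obtain ⟨i, hi⟩ := exists_desc (cs := cs) y hy
      exact h2 i y hi (ih _ (hn ▸ hi) _ rfl)

theorem updown (z : W) (i : B) : cs.length z < cs.length (cs.simple i * z) ∨
    cs.length (cs.simple i * z) < cs.length z := by
  rcases cs.length_simple_mul z i with h | h <;> omega

theorem XRec_unique (H : HS cs st) (P Q : {z : W // st z = z⁻¹} → W → ℤ[X])
    (hP : XRec cs st P) (hQ : XRec cs st Q) : P = Q := by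
  funext z y
  revert z
  revert y
  refine XRec.ind H (fun z => by rw [hP.1, hQ.1]) ?_
  intro i y hy ih z
  obtain ⟨a1, a2, a3, a4⟩ := hP.2 i y hy z
  obtain ⟨b1, b2, b3, b4⟩ := hQ.2 i y hy z
  by_cases hr : cs.simple i * z.1 = z.1 * st (cs.simple i)
  · have h := H.real_inv z.2 hr
    rcases updown (cs := cs) z.1 i with hu | hu
    · rw [a1 hr hu h, b1 hr hu h, ih, ih]
    · rw [a2 hr hu h, b2 hr hu h, ih, ih]
  · have h := H.cplx_inv z.2 i
    rcases updown (cs := cs) z.1 i with hu | hu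
    · rw [a3 hr hu h, b3 hr hu h, ih]
    · rw [a4 hr hu h, b4 hr hu h, ih, ih]

theorem XRec_dvd (H : HS cs st) (P : {z : W // st z = z⁻¹} → W → ℤ[X])
    (hP : XRec cs st P) : ∀ y z, X ^ cs.length z.1 ∣ P z y := by
  refine XRec.ind H (fun z => ?_) ?_
  · rw [hP.1]
    split_ifs with h
    · rw [h]; simp
    · simp
  intro i y hy ih z
  obtain ⟨a1, a2, a3, a4⟩ := hP.2 i y hy z
  by_cases hr : cs.simple i * z.1 = z.1 * st (cs.simple i)
  · have h := H.real_inv z.2 hr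
    rcases updown (cs := cs) z.1 i with hu | hu
    · rw [a1 hr hu h]
      have e := ih ⟨_, h⟩
      exact dvd_add (Dvd.dvd.mul_left (ih z) _)
        (Dvd.dvd.mul_left ((pow_dvd_pow _ hu.le).trans e) _)
    · rw [a2 hr hu h]
      have e := ih ⟨_, h⟩
      refine dvd_add (Dvd.dvd.mul_left (ih z) _) ?_
      have hl : cs.length z.1 = 1 + cs.length (cs.simple i * z.1) := by
        rcases cs.length_simple_mul z.1 i with h | h <;> omega
      rw [hl, pow_add, pow_one]
      exact mul_dvd_mul ⟨X - 1, by ring⟩ e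
  · have h := H.cplx_inv z.2 i
    have e := ih ⟨_, h⟩
    rcases updown (cs := cs) z.1 i with hu | hu
    · rw [a3 hr hu h]
      have := H.cplx_up z.2 hr hu
      exact (pow_dvd_pow _ (by simp only; omega)).trans e
    · rw [a4 hr hu h]
      have := H.cplx_down z.2 hr hu
      refine dvd_add (Dvd.dvd.mul_left (ih z) _) ?_
      rw [← this, add_comm, pow_add]
      exact mul_dvd_mul dvd_rfl e

theorem XRec_exists (H : HS cs st) : ∃ P, XRec cs st P := by
  choose w hw hwy using fun y => cs.exists_isReduced y
  have hT : ∀ ω y, cs.IsReduced ω → cs.wordProd ω = y →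
      ((w y).map (TT cs st)).prod = (ω.map (TT cs st)).prod := by
    intro ω y h1 h2
    refine matsumoto cs (TT cs st) ?_ ?_ _ _ _ rfl (hw y) h1 (by rw [← hwy, h2])
    · intro i j hij
      unfold TT
      congr 1
      funext z
      simp only [Tv, hij]
    · exact fun i a b => H.braidT i a b
  refine ⟨fun z y => (((w y).map (TT cs st)).prod (ba z.1)) 1, ?_, ?_⟩
  · intro z
    beta_reduce
    rw [hT [] 1 (by simp [CoxeterSystem.IsReduced]) (by simp)]
    simp [ba, Finsupp.single_apply]
  · intro i y hy z
    have key : ((w y).map (TT cs st)).prod =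
        ((w (y * cs.simple i)).map (TT cs st)).prod * TT cs st i := by
      have hp : cs.wordProd (w (y * cs.simple i) ++ [i]) = y := by
        rw [cs.wordProd_append, ← hwy]; simp
      rw [hT (w (y * cs.simple i) ++ [i]) y _ hp]
      · simp
      · unfold CoxeterSystem.IsReduced
        rw [hp, List.length_append, ← (hw _).eq, ← hwy, List.length_singleton]
        rcases cs.length_mul_simple y i with h | h <;> omega
    have hz := z.2
    simp only [key, Module.End.mul_apply, TT_ba]
    refine ⟨?_, ?_, ?_, ?_⟩
    · intro hr hu h
      rw [Tv, if_pos hz, if_pos hr, if_pos hu]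
      simp only [map_add, map_smul, Finsupp.add_apply, Finsupp.smul_apply, smul_eq_mul]
    · intro hr hu h
      rw [Tv, if_pos hz, if_pos hr, if_neg (by omega)]
      simp only [map_add, map_smul, Finsupp.add_apply, Finsupp.smul_apply, smul_eq_mul]
    · intro hr hu h
      rw [Tv, if_pos hz, if_neg hr, if_pos hu]
    · intro hr hu h
      rw [Tv, if_pos hz, if_neg hr, if_neg (by omega)]
      simp only [map_add, map_smul, Finsupp.add_apply, Finsupp.smul_apply, smul_eq_mul]

end final
end LV

theorem statement5 {B W : Type} [Group W] [Finite B] {M : CoxeterMatrix B}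
    (cs : CoxeterSystem M W) (st : W ≃* W)
    (hst_inv : ∀ w, st (st w) = w)
    (hst_S : ∀ i : B, ∃ j : B, st (cs.simple i) = cs.simple j) :
    (∃! P : {z : W // st z = z⁻¹} → W → Polynomial ℤ, XRec cs st P) ∧
    (∀ P : {z : W // st z = z⁻¹} → W → Polynomial ℤ, XRec cs st P →
      ∀ (z : {z : W // st z = z⁻¹}) (y : W), X ^ cs.length z.1 ∣ P z y) := by
  have H : LV.HS cs st := ⟨hst_inv, hst_S⟩
  obtain ⟨P, hP⟩ := LV.XRec_exists H
  exact ⟨⟨P, hP, fun Q hQ => LV.XRec_unique H Q P hQ hP⟩,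
    fun Q hQ z y => LV.XRec_dvd H Q hQ y z⟩
end
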